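/- arXiv:2106.13313 — 3 statements merged into one kernel-verified Lean document; each statement's English description precedes it below -/
import Mathlib

section
/- limsup_{λ→∞} inf{ (2λ)^{-1} ‖ρ‖²_{L²([0,2λ]×ℝ)} : ρ ∈ L²([0,2λ]×ℝ), Z(ρ; 2λ, 0) ≥ (4πλ)^{-1/2} e^λ } ≤ 4/3. -/
/-!
The static potential `ρ(t, x) = sech² x` is admissible for every `λ > 0`, and its cost is
`(2λ)⁻¹ ‖ρ‖² = ∫ sech⁴ = 4/3`.

Admissibility rests on an explicit subsolution. Since `½ sech'' + sech² · sech = ½ sech`, the function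
`w(t, x) = e^{t/2} sech(x) p(t, x)` satisfies
`∂_t w - ½ ∂_{xx} w - ρ w = -e^{t/2} sech'(x) ∂_x p(t, x) = e^{t/2} sech'(x) (x / t) p(t, x) ≤ 0`,
and it has Dirac initial data. Comparison gives `Z(ρ; t, 0) ≥ w(t, 0) = e^{t/2} p(t, 0)`, which at
`t = 2λ` is exactly the required threshold `(4πλ)^{-1/2} e^λ`.

To make this rigorous on the Duhamel series, everything is divided by the heat kernel. The identity
`p(r, z) p(t - r, y - z) dz = p(t, y) · (law of the Brownian bridge at time r)`
(`integral_heatK_mul_heatK`) turns the `n`-th term into `bridgeTerm n · p` (`kernelTerm_eq`), where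
`0 ≤ bridgeTerm n ≤ tⁿ / n!` (`bridgeTerm_bounds`). The subsolution property becomes
`e^{t/2} sech y ≤ 1 + ∫₀ᵗ E[(e^{r/2} sech · sech²)(X_r)] dr` (`subsol_le`); it follows by
differentiating `r ↦ e^{r/2} E[sech(X_r)]` and using Gaussian integration by parts (`stein_sech`,
`deriv_bound`). Iterating `N` times bounds `e^{t/2} sech y` by the `N`-th partial sum plus a remainder
of order `t^N / N!` (`subsol_le_sum`), which vanishes in the limit.
-/

open MeasureTheory Real Filter

/-- Heat kernel `p(t,x) = (2πt)^{-1/2} exp(-x²/(2t))`. -/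
noncomputable def heatK (t x : ℝ) : ℝ :=
  (Real.sqrt (2 * Real.pi * t))⁻¹ * Real.exp (-(x ^ 2) / (2 * t))

/-- The `n`-th term of the Duhamel series defining the kernel `P(ρ; (s,x) → (t,y))`. -/
noncomputable def kernelTerm (ρ : ℝ → ℝ → ℝ) (s x : ℝ) : ℕ → ℝ → ℝ → ℝ
  | 0, t, y => heatK (t - s) (x - y)
  | n + 1, t, y =>
      ∫ r in Set.Ioo s t, ∫ z : ℝ, kernelTerm ρ s x n r z * ρ r z * heatK (t - r) (y - z)

/-- The kernel `P(ρ; (s,x) → (t,y))`, given by the absolutely convergent Duhamel series. -/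
noncomputable def kerP (ρ : ℝ → ℝ → ℝ) (s x t y : ℝ) : ℝ := ∑' n : ℕ, kernelTerm ρ s x n t y

/-- `Z(ρ; t, x) := P(ρ; (0,0) → (t,x))`, the solution of `∂_t Z = ½ ∂_{xx} Z + ρ Z`
with Dirac-delta initial data. -/
noncomputable def Zsol (ρ : ℝ → ℝ → ℝ) (t x : ℝ) : ℝ := kerP ρ 0 0 t x

/-- `ρ ∈ L²([a,b] × ℝ)`. -/
def InL2 (ρ : ℝ → ℝ → ℝ) (a b : ℝ) : Prop :=
  MeasureTheory.Integrable (fun q : ℝ × ℝ => (ρ q.1 q.2) ^ 2)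
    (MeasureTheory.volume.restrict (Set.Icc a b ×ˢ Set.univ))

/-- The squared `L²` norm `‖ρ‖²_{L²([a,b] × ℝ)}`. -/
noncomputable def l2sq (ρ : ℝ → ℝ → ℝ) (a b : ℝ) : ℝ :=
  ∫ q in Set.Icc a b ×ˢ (Set.univ : Set ℝ), (ρ q.1 q.2) ^ 2

/-- `inf { (2λ)^{-1}‖ρ‖²_{L²([0,2λ]×ℝ)} : Z(ρ; 2λ, 0) ≥ (4πλ)^{-1/2} e^λ }`. -/
noncomputable def infExpr (l : ℝ) : ℝ :=
  sInf { c : ℝ | ∃ ρ : ℝ → ℝ → ℝ, InL2 ρ 0 (2 * l) ∧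
    Zsol ρ (2 * l) 0 ≥ (Real.sqrt (4 * Real.pi * l))⁻¹ * Real.exp l ∧
    c = (2 * l)⁻¹ * l2sq ρ 0 (2 * l) }

open ProbabilityTheory

/-! ### The hyperbolic secant -/

/-- The hyperbolic secant `1 / cosh x`. -/
noncomputable def sech (x : ℝ) : ℝ := (Real.cosh x)⁻¹

/-- The derivative of `sech`, in closed form. -/
noncomputable def sech' (x : ℝ) : ℝ := -Real.sinh x / Real.cosh x ^ 2

/-- The second derivative of `sech`. The defining identity says that `sech` satisfies
`½ sech'' + sech² · sech = ½ sech`. -/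
noncomputable def sech'' (x : ℝ) : ℝ := sech x - 2 * sech x ^ 3

lemma sech_pos (x : ℝ) : 0 < sech x := inv_pos.2 (Real.cosh_pos x)

lemma sech_le_one (x : ℝ) : sech x ≤ 1 := inv_le_one_of_one_le₀ (Real.one_le_cosh x)

lemma sech_zero : sech 0 = 1 := by simp [sech]

lemma hasDerivAt_sech (x : ℝ) : HasDerivAt sech (sech' x) x :=
  (Real.hasDerivAt_cosh x).inv (Real.cosh_pos x).ne'

lemma hasDerivAt_sech' (x : ℝ) : HasDerivAt sech' (sech'' x) x := by
  have hc := (Real.cosh_pos x).ne'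
  have h := ((Real.hasDerivAt_sinh x).neg).div ((Real.hasDerivAt_cosh x).pow 2) (pow_ne_zero 2 hc)
  refine h.congr_deriv ?_
  have hs := Real.cosh_sq x
  simp only [sech'', sech, Pi.pow_apply, Pi.neg_apply]
  field_simp
  have hs' : Real.sinh x ^ 2 = Real.cosh x ^ 2 - 1 := by linarith
  push_cast
  ring_nf
  rw [hs']
  ring

lemma continuous_sech : Continuous sech :=
  continuous_iff_continuousAt.2 fun x => (hasDerivAt_sech x).continuousAt

lemma continuous_sech' : Continuous sech' :=
  continuous_iff_continuousAt.2 fun x => (hasDerivAt_sech' x).continuousAt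

lemma continuous_sech'' : Continuous sech'' := by
  unfold sech''
  have := continuous_sech
  fun_prop

lemma abs_sech'_le_one (x : ℝ) : |sech' x| ≤ 1 := by
  have hc := Real.cosh_pos x
  have h1 := Real.one_le_cosh x
  have hs := Real.cosh_sq x
  rw [sech', abs_div, abs_neg, abs_of_pos (pow_pos hc 2), div_le_one (pow_pos hc 2)]
  have : |Real.sinh x| ≤ Real.cosh x := abs_le_of_sq_le_sq (by linarith) hc.le
  nlinarith

lemma abs_sech''_le (x : ℝ) : |sech'' x| ≤ 3 := by
  have h0 := sech_pos x
  have h1 := sech_le_one x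
  have h3 : sech x ^ 3 ≤ 1 := pow_le_one₀ h0.le h1
  have h4 : 0 < sech x ^ 3 := by positivity
  rw [sech'', abs_le]
  constructor <;> linarith

/-- `sech` decreases in `|x|`. This sign is what makes `subsol` a subsolution. -/
lemma sech'_mul_self_nonpos (x : ℝ) : sech' x * x ≤ 0 := by
  have h : 0 ≤ Real.sinh x * x := by
    rcases le_total 0 x with hx | hx
    · exact mul_nonneg (Real.sinh_nonneg_iff.2 hx) hx
    · exact mul_nonneg_of_nonpos_of_nonpos (Real.sinh_nonpos_iff.2 hx) hx
  have : sech' x * x = -(Real.sinh x * x / Real.cosh x ^ 2) := by rw [sech']; ring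
  rw [this]
  exact neg_nonpos.2 (by positivity)

lemma tendsto_tanh_atTop : Tendsto Real.tanh atTop (nhds 1) := by
  have h : Real.tanh = fun x => (1 - Real.exp (-2 * x)) / (1 + Real.exp (-2 * x)) := by
    funext x
    have h2 : Real.exp (-2 * x) = Real.exp (-x) * Real.exp (-x) := by rw [← Real.exp_add]; ring_nf
    have h3 : Real.exp x * Real.exp (-x) = 1 := by rw [← Real.exp_add]; simp
    have := Real.exp_pos x
    have := Real.exp_pos (-x)
    rw [Real.tanh_eq, h2, div_eq_div_iff (by positivity) (by positivity)]
    linear_combination 2 * Real.exp (-x) * h3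
  have h0 : Tendsto (fun x : ℝ => Real.exp (-2 * x)) atTop (nhds 0) :=
    Real.tendsto_exp_atBot.comp (tendsto_id.const_mul_atTop_of_neg (by norm_num))
  rw [h]
  have h1 := (h0.const_sub 1).div (h0.const_add 1) (by norm_num)
  rw [sub_zero, add_zero, div_one] at h1
  exact h1

/-- The antiderivative of `sech⁴` is `tanh - tanh³ / 3`. -/
lemma integral_sech_pow_four : ∫ x, sech x ^ 4 = 4 / 3 := by
  have hd (x : ℝ) : HasDerivAt (fun x => Real.tanh x - Real.tanh x ^ 3 / 3) (sech x ^ 4) x := by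
    have hc := (Real.cosh_pos x).ne'
    have ht : HasDerivAt Real.tanh (sech x ^ 2) x := by
      have h := (Real.hasDerivAt_sinh x).div (Real.hasDerivAt_cosh x) hc
      rw [show Real.tanh = fun x => Real.sinh x / Real.cosh x from
        funext Real.tanh_eq_sinh_div_cosh]
      refine h.congr_deriv ?_
      have hs := Real.cosh_sq x
      rw [sech]
      field_simp
      linarith
    refine (ht.sub ((ht.pow 3).div_const 3)).congr_deriv ?_
    have hs := Real.cosh_sq x
    have hs' : Real.tanh x ^ 2 = 1 - sech x ^ 2 := by
      rw [Real.tanh_eq_sinh_div_cosh, sech]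
      field_simp
      linarith
    push_cast
    norm_num only [hs']
    ring
  have hi := integral_Ioi_of_hasDerivAt_of_nonneg' (a := 0) (fun x _ => hd x)
    (fun x _ => by have := sech_pos x; positivity)
    (tendsto_tanh_atTop.sub ((tendsto_tanh_atTop.pow 3).div_const 3))
  have ha := integral_comp_abs (f := fun x => sech x ^ 4)
  simp only [sech, Real.cosh_abs] at ha hi ⊢
  rw [ha, hi]
  norm_num

/-! ### Cost of the potential -/

lemma l2sq_sech (l : ℝ) (hl : 0 < l) :
    InL2 (fun _ z => sech z ^ 2) 0 (2 * l) ∧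
      l2sq (fun _ z => sech z ^ 2) 0 (2 * l) = 2 * l * (4 / 3) := by
  have hint : Integrable fun x => sech x ^ 4 := by
    -- a non-integrable function would have integral `0`, not `4 / 3`
    by_contra h
    have := integral_undef h
    rw [integral_sech_pow_four] at this
    norm_num at this
  have hmeas : (volume : Measure (ℝ × ℝ)).restrict (Set.Icc 0 (2 * l) ×ˢ Set.univ)
      = (volume.restrict (Set.Icc 0 (2 * l))).prod volume := by
    rw [Measure.volume_eq_prod, ← Measure.prod_restrict, Measure.restrict_univ]
  have he : (fun q : ℝ × ℝ => (sech q.2 ^ 2) ^ 2) = fun q => 1 * sech q.2 ^ 4 := by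
    funext q; ring
  constructor
  · rw [InL2, hmeas, he]
    exact (integrable_const (1 : ℝ)).mul_prod hint
  · rw [l2sq, hmeas, he, integral_prod_mul (fun _ : ℝ => (1 : ℝ)) (fun x => sech x ^ 4),
      integral_sech_pow_four]
    simp [hl.le]

/-! ### Gaussian integration by parts -/

/-- The standard Gaussian measure on `ℝ`. -/
noncomputable abbrev stdN : Measure ℝ := gaussianReal 0 1

lemma integrable_stdN_of_bound {f : ℝ → ℝ} (C : ℝ) (hf : Measurable f) (h : ∀ z, |f z| ≤ C) :
    Integrable f stdN :=
  Integrable.of_bound hf.aestronglyMeasurable C (Eventually.of_forall h)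

lemma integrable_id_stdN : Integrable (fun z : ℝ => z) stdN :=
  (memLp_id_gaussianReal' (μ := 0) (v := 1) 1 (by simp)).integrable le_rfl

lemma integrable_mul_id_stdN {f : ℝ → ℝ} (hf : Measurable f) (h : ∀ z, |f z| ≤ 1) :
    Integrable (fun z => f z * z) stdN :=
  integrable_id_stdN.bdd_mul hf.aestronglyMeasurable (c := 1) (Eventually.of_forall h)

lemma stdN_pdf (z : ℝ) : gaussianPDFReal 0 1 z = heatK 1 z := by
  simp [gaussianPDFReal, heatK]

/-- Stein's identity `σ E[f'(a + σN)] = E[f(a + σN) N]` for `f = sech'`, written as one integral. -/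
lemma stein_sech (a b : ℝ) :
    ∫ z, (b * sech'' (a + b * z) - sech' (a + b * z) * z) ∂stdN = 0 := by
  have h1 : Measurable fun z => sech'' (a + b * z) :=
    (continuous_sech''.comp (by fun_prop)).measurable
  have h2 : Measurable fun z => sech' (a + b * z) :=
    (continuous_sech'.comp (by fun_prop)).measurable
  have hI1 : Integrable (fun z => b * sech'' (a + b * z) - sech' (a + b * z) * z) stdN :=
    ((integrable_stdN_of_bound 3 h1 fun z => abs_sech''_le _).const_mul b).sub
      (integrable_mul_id_stdN h2 fun z => abs_sech'_le_one _)
  have hI2 : Integrable (fun z => sech' (a + b * z)) stdN :=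
    integrable_stdN_of_bound 1 h2 fun z => abs_sech'_le_one _
  have key {f : ℝ → ℝ} (hf : Integrable f stdN) :
      Integrable fun z => gaussianPDFReal 0 1 z * f z := by
    rw [stdN, gaussianReal_of_var_ne_zero _ one_ne_zero,
      integrable_withDensity_iff_integrable_smul' (measurable_gaussianPDF 0 1)
        (Eventually.of_forall fun _ => gaussianPDF_lt_top)] at hf
    simpa [toReal_gaussianPDF] using hf
  rw [integral_gaussianReal_eq_integral_smul one_ne_zero]
  simp only [smul_eq_mul]
  refine integral_eq_zero_of_hasDerivAt_of_integrable
    (f := fun z => gaussianPDFReal 0 1 z * sech' (a + b * z)) (fun z => ?_) (key hI1) (key hI2)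
  have hp : HasDerivAt (gaussianPDFReal 0 1) (-z * gaussianPDFReal 0 1 z) z := by
    rw [show gaussianPDFReal 0 1 = heatK 1 from funext stdN_pdf]
    have := ((((hasDerivAt_id z).pow 2).neg.div_const (2 * 1)).exp).const_mul
      (Real.sqrt (2 * Real.pi * 1))⁻¹
    refine this.congr_deriv ?_
    simp [heatK]
    ring
  have hlin : HasDerivAt (fun z : ℝ => a + b * z) b z := by
    simpa using ((hasDerivAt_id z).const_mul b).const_add a
  refine (hp.mul ((hasDerivAt_sech' (a + b * z)).comp z hlin)).congr_deriv ?_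
  simp only [Function.comp_apply]
  ring

/-! ### Brownian bridge form of the Duhamel series -/

/-- The position at time `r` of the Brownian bridge from `(0, 0)` to `(t, y)`, as a function of a
standard Gaussian variable `z`: mean `r y / t` and variance `r (t - r) / t`. -/
noncomputable def bridge (r t y z : ℝ) : ℝ := r * y / t + Real.sqrt (r * (t - r) / t) * z

/-- The `n`-th Duhamel term for the potential `sech²` divided by the heat kernel `p(t, y)`. It is
defined by the recursion that this quotient satisfies, in which the singularities at the time
endpoints have disappeared. -/
noncomputable def bridgeTerm : ℕ → ℝ → ℝ → ℝ
  | 0, _, _ => 1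
  | n + 1, t, y => ∫ r in Set.Ioo 0 t, ∫ z,
      bridgeTerm n r (bridge r t y z) * sech (bridge r t y z) ^ 2 ∂stdN

/-- Disintegration of the heat kernel at an intermediate time: `p(r, z) p(t - r, y - z) dz` is
`p(t, y)` times the law of the bridge at time `r`. No integrability of `f` is needed, since both
sides arise from one affine change of variables. -/
lemma integral_heatK_mul_heatK (f : ℝ → ℝ) {r t : ℝ} (y : ℝ) (hr : 0 < r) (hrt : r < t) :
    ∫ z, f z * (heatK r z * heatK (t - r) (y - z))
      = (∫ z, f (bridge r t y z) ∂stdN) * heatK t y := by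
  have ht : 0 < t := hr.trans hrt
  have htr : 0 < t - r := sub_pos.2 hrt
  set σ := Real.sqrt (r * (t - r) / t) with hσ
  have hσpos : 0 < σ := Real.sqrt_pos.2 (by positivity)
  have hσ2 : σ ^ 2 = r * (t - r) / t := Real.sq_sqrt (by positivity)
  have hdens (z : ℝ) : heatK r (bridge r t y z) * heatK (t - r) (y - bridge r t y z)
      = σ⁻¹ * (heatK 1 z * heatK t y) := by
    have hpre : (Real.sqrt (2 * Real.pi * r))⁻¹ * (Real.sqrt (2 * Real.pi * (t - r)))⁻¹
        = σ⁻¹ * ((Real.sqrt (2 * Real.pi * 1))⁻¹ * (Real.sqrt (2 * Real.pi * t))⁻¹) := by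
      have hpi := Real.pi_pos
      simp only [hσ, ← Real.sqrt_inv]
      simp only [← Real.sqrt_mul' _ (inv_nonneg.2 (show 0 ≤ 2 * Real.pi * (t - r) by positivity)),
        ← Real.sqrt_mul' _ (inv_nonneg.2 (show 0 ≤ 2 * Real.pi * t by positivity))]
      rw [← Real.sqrt_mul (by positivity)]
      congr 1
      field_simp
    have hexp : -(bridge r t y z ^ 2) / (2 * r) + -((y - bridge r t y z) ^ 2) / (2 * (t - r))
        = -(z ^ 2) / (2 * 1) + -(y ^ 2) / (2 * t) := by
      have hb : bridge r t y z = r * y / t + σ * z := rfl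
      have e : -(bridge r t y z ^ 2) / (2 * r) + -((y - bridge r t y z) ^ 2) / (2 * (t - r))
        = -(σ ^ 2 * t / (2 * r * (t - r))) * z ^ 2 + -(y ^ 2) / (2 * t) := by
        rw [hb]
        field_simp
        ring
      rw [e, hσ2]
      field_simp
    have he := congrArg Real.exp hexp
    rw [Real.exp_add, Real.exp_add] at he
    simp only [heatK]
    calc _ = ((Real.sqrt (2 * Real.pi * r))⁻¹ * (Real.sqrt (2 * Real.pi * (t - r)))⁻¹) *
          (Real.exp (-(bridge r t y z ^ 2) / (2 * r)) *
            Real.exp (-((y - bridge r t y z) ^ 2) / (2 * (t - r)))) := by ring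
      _ = _ := by rw [hpre, he]; ring
  have hsub : ∫ z, f z * (heatK r z * heatK (t - r) (y - z))
      = σ * ∫ z, f (bridge r t y z) *
        (heatK r (bridge r t y z) * heatK (t - r) (y - bridge r t y z)) := by
    set h : ℝ → ℝ := fun z => f z * (heatK r z * heatK (t - r) (y - z)) with hh
    have h1 := Measure.integral_comp_mul_left (fun z => h (r * y / t + z)) σ
    rw [integral_add_left_eq_self h, abs_of_pos (inv_pos.2 hσpos)] at h1
    change ∫ z, h z = σ * ∫ z, h (r * y / t + σ * z)
    rw [h1, smul_eq_mul, mul_inv_cancel_left₀ hσpos.ne']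
  rw [hsub, integral_gaussianReal_eq_integral_smul one_ne_zero, ← integral_const_mul,
    ← integral_mul_const]
  congr 1
  funext z
  rw [hdens, stdN_pdf, smul_eq_mul]
  field_simp

lemma kernelTerm_eq (n : ℕ) : ∀ {t : ℝ} (y : ℝ), 0 < t →
    kernelTerm (fun _ z => sech z ^ 2) 0 0 n t y = bridgeTerm n t y * heatK t y := by
  induction n with
  | zero => intro t y _; simp [kernelTerm, bridgeTerm, heatK]
  | succ n ih =>
    intro t y ht
    rw [kernelTerm, bridgeTerm, ← integral_mul_const]
    refine setIntegral_congr_fun measurableSet_Ioo fun r hr => ?_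
    rw [← integral_heatK_mul_heatK (fun z => bridgeTerm n r z * sech z ^ 2) y hr.1 hr.2]
    congr 1
    funext z
    rw [ih z hr.1]
    ring

lemma measurable_bridge : Measurable fun q : (ℝ × ℝ × ℝ) × ℝ =>
    bridge q.1.1 q.1.2.1 q.1.2.2 q.2 := by
  unfold bridge
  fun_prop

lemma measurable_bridgeTerm (n : ℕ) : Measurable fun q : ℝ × ℝ => bridgeTerm n q.1 q.2 := by
  induction n with
  | zero => exact measurable_const
  | succ n ih =>
    have hin : Measurable fun q : ℝ × ℝ × ℝ => ∫ z, bridgeTerm n q.1 (bridge q.1 q.2.1 q.2.2 z) *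
        sech (bridge q.1 q.2.1 q.2.2 z) ^ 2 ∂stdN := by
      refine (StronglyMeasurable.integral_prod_right (f := fun (q : ℝ × ℝ × ℝ) z =>
        bridgeTerm n q.1 (bridge q.1 q.2.1 q.2.2 z) * sech (bridge q.1 q.2.1 q.2.2 z) ^ 2)
        (Measurable.stronglyMeasurable ?_)).measurable
      exact (ih.comp (measurable_fst.fst.prodMk measurable_bridge)).mul
        ((continuous_sech.measurable.comp measurable_bridge).pow_const 2)
    have hS : MeasurableSet {q : (ℝ × ℝ) × ℝ | 0 < q.2 ∧ q.2 < q.1.1} :=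
      (measurableSet_lt measurable_const measurable_snd).inter
        (measurableSet_lt measurable_snd measurable_fst.fst)
    have hind := (hin.comp (f := fun q : (ℝ × ℝ) × ℝ => (q.2, q.1))
      (measurable_snd.prodMk measurable_fst)).indicator hS
    have := (StronglyMeasurable.integral_prod_right (ν := volume)
      (f := fun (p : ℝ × ℝ) (r : ℝ) => ({q : (ℝ × ℝ) × ℝ | 0 < q.2 ∧ q.2 < q.1.1}.indicator
        ((fun q : ℝ × ℝ × ℝ => ∫ z, bridgeTerm n q.1 (bridge q.1 q.2.1 q.2.2 z) *
        sech (bridge q.1 q.2.1 q.2.2 z) ^ 2 ∂stdN) ∘ fun q : (ℝ × ℝ) × ℝ => (q.2, q.1))) (p, r))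
      hind.stronglyMeasurable).measurable
    convert this using 2 with q
    rw [bridgeTerm, ← integral_indicator measurableSet_Ioo]
    rfl

/-- The integrand in time of one Duhamel step in bridge form: the expectation of
`f(r, X) sech²(X)`, with `X` the bridge from `(0, 0)` to `(t, y)` at time `r`. -/
noncomputable def bridgeOp (f : ℝ → ℝ → ℝ) (t y r : ℝ) : ℝ :=
  ∫ z, f r (bridge r t y z) * sech (bridge r t y z) ^ 2 ∂stdN

lemma integrable_bridge {f : ℝ → ℝ → ℝ} (hf : Measurable fun q : ℝ × ℝ => f q.1 q.2)
    {t y r C : ℝ} (hb : ∀ x, |f r x| ≤ C) :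
    Integrable (fun z => f r (bridge r t y z) * sech (bridge r t y z) ^ 2) stdN := by
  have hm : Measurable fun z => bridge r t y z := by unfold bridge; fun_prop
  refine integrable_stdN_of_bound C ?_ fun z => ?_
  · exact (hf.comp (measurable_const.prodMk hm)).mul
      ((continuous_sech.measurable.comp hm).pow_const 2)
  · have h0 := sech_pos (bridge r t y z)
    rw [abs_mul, abs_of_pos (pow_pos h0 2)]
    exact (mul_le_of_le_one_right (abs_nonneg _)
      (pow_le_one₀ h0.le (sech_le_one _))).trans (hb _)

lemma abs_bridgeOp_le {f : ℝ → ℝ → ℝ} {t y r C : ℝ} (hb : ∀ x, |f r x| ≤ C) :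
    |bridgeOp f t y r| ≤ C := by
  have := norm_integral_le_of_norm_le_const (μ := stdN) (C := C)
    (f := fun z => f r (bridge r t y z) * sech (bridge r t y z) ^ 2)
    (Eventually.of_forall fun z => ?_)
  · simpa [bridgeOp] using this
  · have h0 := sech_pos (bridge r t y z)
    rw [Real.norm_eq_abs, abs_mul, abs_of_pos (pow_pos h0 2)]
    exact (mul_le_of_le_one_right (abs_nonneg _)
      (pow_le_one₀ h0.le (sech_le_one _))).trans (hb _)

lemma integrableOn_bridgeOp {f : ℝ → ℝ → ℝ} (hf : Measurable fun q : ℝ × ℝ => f q.1 q.2)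
    {t y C : ℝ} (hb : ∀ r ∈ Set.Ioo 0 t, ∀ x, |f r x| ≤ C) :
    IntegrableOn (bridgeOp f t y) (Set.Ioo 0 t) := by
  have hm : Measurable fun q : ℝ × ℝ => bridge q.1 t y q.2 := by unfold bridge; fun_prop
  have hmeas : Measurable (bridgeOp f t y) := by
    refine (StronglyMeasurable.integral_prod_right (f := fun r z =>
      f r (bridge r t y z) * sech (bridge r t y z) ^ 2)
      (Measurable.stronglyMeasurable ?_)).measurable
    exact (hf.comp (measurable_fst.prodMk hm)).mul
      ((continuous_sech.measurable.comp hm).pow_const 2)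
  refine Measure.integrableOn_of_bounded (M := C) (by simp) hmeas.aestronglyMeasurable ?_
  filter_upwards [ae_restrict_mem measurableSet_Ioo] with r hr
  exact abs_bridgeOp_le (hb r hr)

lemma setIntegral_pow_div_factorial (n : ℕ) {t : ℝ} (ht : 0 ≤ t) :
    ∫ r in Set.Ioo 0 t, r ^ n / n.factorial = t ^ (n + 1) / (n + 1).factorial := by
  rw [← integral_Ioc_eq_integral_Ioo, ← intervalIntegral.integral_of_le ht,
    intervalIntegral.integral_div, integral_pow, Nat.factorial_succ]
  have := Nat.factorial_ne_zero n
  push_cast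
  field_simp
  simp

lemma integrableOn_pow_div_factorial (n : ℕ) (t : ℝ) :
    IntegrableOn (fun r : ℝ => r ^ n / n.factorial) (Set.Ioo 0 t) :=
  ((Continuous.continuousOn (by fun_prop)).integrableOn_Icc (a := 0) (b := t)).mono_set
    Set.Ioo_subset_Icc_self

lemma bridgeTerm_bounds (n : ℕ) : ∀ {t : ℝ} (y : ℝ), 0 ≤ t →
    0 ≤ bridgeTerm n t y ∧ bridgeTerm n t y ≤ t ^ n / n.factorial := by
  induction n with
  | zero => intro t y _; simp [bridgeTerm]
  | succ n ih =>
    intro t y ht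
    have hb (r : ℝ) (hr : r ∈ Set.Ioo 0 t) (x : ℝ) : |bridgeTerm n r x| ≤ r ^ n / n.factorial := by
      rw [abs_of_nonneg (ih x hr.1.le).1]
      exact (ih x hr.1.le).2
    constructor
    · refine setIntegral_nonneg measurableSet_Ioo fun r hr => integral_nonneg fun z => ?_
      exact mul_nonneg (ih _ hr.1.le).1 (sq_nonneg _)
    · rw [← setIntegral_pow_div_factorial n ht]
      refine setIntegral_mono_on (integrableOn_bridgeOp (measurable_bridgeTerm n)
        (C := t ^ n / n.factorial) fun r hr x => (hb r hr x).trans ?_)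
        (integrableOn_pow_div_factorial n t) measurableSet_Ioo
        fun r hr => (le_abs_self _).trans (abs_bridgeOp_le (hb r hr))
      have := hr.1.le
      have := hr.2.le
      gcongr

/-! ### The subsolution -/

/-- The quotient by `p(t, y)` of the subsolution `e^{t/2} sech(y) p(t, y)`. -/
noncomputable def subsol (t y : ℝ) : ℝ := Real.exp (t / 2) * sech y

lemma hasDerivAt_bridge {r t : ℝ} (y z : ℝ) (hr : 0 < r) (hrt : r < t) :
    HasDerivAt (fun r => bridge r t y z)
      (y / t + (t - 2 * r) / t / (2 * Real.sqrt (r * (t - r) / t)) * z) r := by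
  have ht : 0 < t := hr.trans hrt
  have htr : 0 < t - r := sub_pos.2 hrt
  have h1 : HasDerivAt (fun r : ℝ => r * y / t) (y / t) r := by
    simpa using ((hasDerivAt_id r).mul_const y).div_const t
  have h2 : HasDerivAt (fun r : ℝ => r * (t - r) / t) ((t - 2 * r) / t) r := by
    refine (((hasDerivAt_id r).mul ((hasDerivAt_id r).const_sub t)).div_const t).congr_deriv ?_
    simp only [id]
    ring
  exact h1.add ((h2.sqrt (by positivity)).mul_const z)

lemma hasDerivAt_integral_sech_bridge {r t : ℝ} (y : ℝ) (hr : 0 < r) (hrt : r < t) :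
    HasDerivAt (fun r => ∫ z, sech (bridge r t y z) ∂stdN)
      (∫ z, sech' (bridge r t y z) *
        (y / t + (t - 2 * r) / t / (2 * Real.sqrt (r * (t - r) / t)) * z) ∂stdN) r := by
  have ht : 0 < t := hr.trans hrt
  have htr : 0 < t - r := sub_pos.2 hrt
  set σ' : ℝ → ℝ := fun r => (t - 2 * r) / t / (2 * Real.sqrt (r * (t - r) / t)) with hσ'
  have hm (r : ℝ) : Measurable fun z => bridge r t y z := by unfold bridge; fun_prop
  have hc : ContinuousAt σ' r := by
    have : (2 * Real.sqrt (r * (t - r) / t)) ≠ 0 := by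
      have := Real.sqrt_pos.2 (show 0 < r * (t - r) / t by positivity)
      positivity
    refine ContinuousAt.div (by fun_prop) (by fun_prop) this
  -- `σ'` blows up at the ends of `(0, t)`, so the domination is local
  have hs : {x | |σ' x| < |σ' r| + 1} ∩ Set.Ioo 0 t ∈ nhds r :=
    inter_mem (hc.abs.eventually_lt continuousAt_const (by linarith)) (Ioo_mem_nhds hr hrt)
  refine (hasDerivAt_integral_of_dominated_loc_of_deriv_le (μ := stdN)
    (F := fun r z => sech (bridge r t y z))
    (F' := fun r z => sech' (bridge r t y z) * (y / t + σ' r * z))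
    (bound := fun z => |y / t| + (|σ' r| + 1) * |z|) hs ?_ ?_ ?_ ?_ ?_ ?_).2
  · exact Eventually.of_forall fun x => (continuous_sech.measurable.comp (hm x)).aestronglyMeasurable
  · refine integrable_stdN_of_bound 1 (continuous_sech.measurable.comp (hm r)) fun z => ?_
    rw [abs_of_pos (sech_pos _)]
    exact sech_le_one _
  · exact ((continuous_sech'.measurable.comp (hm r)).mul (by fun_prop)).aestronglyMeasurable
  · refine Eventually.of_forall fun z x hx => ?_
    have hx1 : |σ' x| ≤ |σ' r| + 1 := le_of_lt hx.1
    calc ‖sech' (bridge x t y z) * (y / t + σ' x * z)‖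
        ≤ 1 * |y / t + σ' x * z| := by
          rw [Real.norm_eq_abs, abs_mul]
          gcongr
          exact abs_sech'_le_one _
      _ ≤ |y / t| + |σ' x| * |z| := by
          rw [one_mul, ← abs_mul]; exact abs_add_le _ _
      _ ≤ _ := by gcongr
  · exact (integrable_const _).add (integrable_id_stdN.abs.const_mul _)
  · exact Eventually.of_forall fun z x hx =>
      (hasDerivAt_sech _).comp x (hasDerivAt_bridge y z hx.2.1 hx.2.2)

/-- The differential inequality behind `subsol_le`. With `X` the bridge at time `r`, Stein's identity
turns the difference of the two sides into `E[sech'(X) X] / r`, which is nonpositive. -/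
lemma deriv_bound {r t : ℝ} (y : ℝ) (hr : 0 < r) (hrt : r < t) :
    1 / 2 * (∫ z, sech (bridge r t y z) ∂stdN) + (∫ z, sech' (bridge r t y z) *
        (y / t + (t - 2 * r) / t / (2 * Real.sqrt (r * (t - r) / t)) * z) ∂stdN)
      ≤ ∫ z, sech (bridge r t y z) * sech (bridge r t y z) ^ 2 ∂stdN := by
  have ht : 0 < t := hr.trans hrt
  have htr : 0 < t - r := sub_pos.2 hrt
  set σ := Real.sqrt (r * (t - r) / t) with hσ
  have hσpos : 0 < σ := Real.sqrt_pos.2 (by positivity)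
  have hσ2 : σ ^ 2 = r * (t - r) / t := Real.sq_sqrt (by positivity)
  have hm : Measurable fun z => bridge r t y z := by unfold bridge; fun_prop
  have i0 : Integrable (fun z => sech (bridge r t y z)) stdN :=
    integrable_stdN_of_bound 1 (continuous_sech.measurable.comp hm) fun z => by
      rw [abs_of_pos (sech_pos _)]; exact sech_le_one _
  have i3 : Integrable (fun z => sech (bridge r t y z) * sech (bridge r t y z) ^ 2) stdN :=
    integrable_bridge (f := fun _ x => sech x) (continuous_sech.measurable.comp measurable_snd)
      (C := 1) fun x => by rw [abs_of_pos (sech_pos _)]; exact sech_le_one _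
  have i1 : Integrable (fun z => sech' (bridge r t y z)) stdN :=
    integrable_stdN_of_bound 1 (continuous_sech'.measurable.comp hm) fun z => abs_sech'_le_one _
  have i1z : Integrable (fun z => sech' (bridge r t y z) * z) stdN :=
    integrable_mul_id_stdN (continuous_sech'.measurable.comp hm) fun z => abs_sech'_le_one _
  have i2 : Integrable (fun z => sech'' (bridge r t y z)) stdN :=
    integrable_stdN_of_bound 3 (continuous_sech''.measurable.comp hm) fun z => abs_sech''_le _
  set c := (t - 2 * r) / t / (2 * σ) with hcdef
  have i1c : Integrable (fun z => sech' (bridge r t y z) * (y / t + c * z)) stdN := by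
    refine ((i1.mul_const (y / t)).add (i1z.mul_const c)).congr (Eventually.of_forall fun z => ?_)
    simp only [Pi.add_apply]
    ring
  have hst := stein_sech (r * y / t) σ
  have hst' : ∫ z, (σ * sech'' (bridge r t y z) - sech' (bridge r t y z) * z) ∂stdN = 0 := hst
  have ist : Integrable (fun z => σ * sech'' (bridge r t y z) - sech' (bridge r t y z) * z) stdN :=
    (i2.const_mul σ).sub i1z
  have hneg : ∫ z, sech' (bridge r t y z) * bridge r t y z / r ∂stdN ≤ 0 :=
    integral_nonpos fun z => div_nonpos_of_nonpos_of_nonneg (sech'_mul_self_nonpos _) hr.le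
  have hpt (z : ℝ) : sech' (bridge r t y z) * bridge r t y z / r
      = 1 / 2 * sech (bridge r t y z) + sech' (bridge r t y z) * (y / t + c * z)
        - sech (bridge r t y z) * sech (bridge r t y z) ^ 2
        - 1 / (2 * σ) * (σ * sech'' (bridge r t y z) - sech' (bridge r t y z) * z) := by
    have hb : bridge r t y z / r = y / t + c * z + 1 / (2 * σ) * z := by
      have : σ / r = c + 1 / (2 * σ) := by
        rw [hcdef]
        field_simp
        rw [hσ2]
        field_simp
        ring
      calc bridge r t y z / r = y / t + σ / r * z := by
            rw [show bridge r t y z = r * y / t + σ * z from rfl]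
            field_simp
        _ = _ := by rw [this]; ring
    have hs : 1 / (2 * σ) * (σ * sech'' (bridge r t y z)) = 1 / 2 * sech'' (bridge r t y z) := by
      field_simp
    rw [mul_div_assoc, hb, mul_sub, hs, sech'']
    ring
  simp only [hpt] at hneg
  have e1 := integral_sub (((i0.const_mul (1 / 2)).add i1c).sub i3) (ist.const_mul (1 / (2 * σ)))
  have e2 := integral_sub ((i0.const_mul (1 / 2)).add i1c) i3
  have e3 := integral_add (i0.const_mul (1 / 2)) i1c
  simp only [Pi.add_apply, Pi.sub_apply] at e1 e2 e3
  rw [e1, e2, e3, integral_const_mul, integral_const_mul, hst'] at hneg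
  linarith

/-- `subsol` is a subsolution of the Duhamel equation in bridge form: along the bridge,
`e^{r/2} E[sech(X_r)]` runs from `1` at `r = 0` to `subsol t y` at `r = t`. The continuity of this
function up to the endpoints, where `√(r (t - r) / t)` is not differentiable, suffices. -/
lemma subsol_le {t : ℝ} (y : ℝ) (ht : 0 < t) :
    subsol t y ≤ 1 + ∫ r in Set.Ioo 0 t, bridgeOp subsol t y r := by
  have hmeas : Measurable fun q : ℝ × ℝ => subsol q.1 q.2 := by
    unfold subsol
    have := continuous_sech.measurable
    fun_prop
  have hbd : ∀ r ∈ Set.Ioo 0 t, ∀ x, |subsol r x| ≤ Real.exp (t / 2) := by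
    intro r hr x
    have := sech_pos x
    rw [subsol, abs_of_pos (by positivity)]
    have := hr.2
    refine (mul_le_of_le_one_right (Real.exp_pos _).le (sech_le_one x)).trans ?_
    gcongr
  have hcont : Continuous fun r => ∫ z, sech (bridge r t y z) ∂stdN := by
    refine continuous_of_dominated (bound := fun _ => 1) (fun r => ?_) (fun r => ?_)
      (integrable_const _) ?_
    · refine (continuous_sech.comp ?_).aestronglyMeasurable
      unfold bridge; fun_prop
    · refine Eventually.of_forall fun z => ?_
      rw [Real.norm_eq_abs, abs_of_pos (sech_pos _)]
      exact sech_le_one _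
    · refine Eventually.of_forall fun z => continuous_sech.comp ?_
      unfold bridge; fun_prop
  have h := intervalIntegral.sub_le_integral_of_hasDeriv_right_of_le ht.le
    (g := fun r => Real.exp (r / 2) * ∫ z, sech (bridge r t y z) ∂stdN)
    (φ := bridgeOp subsol t y)
    ((Continuous.mul (by fun_prop) hcont).continuousOn)
    (fun r hr => by
      have he : HasDerivAt (fun r : ℝ => Real.exp (r / 2)) (Real.exp (r / 2) * (1 / 2)) r :=
        ((hasDerivAt_id r).div_const 2).exp
      exact (he.mul (hasDerivAt_integral_sech_bridge y hr.1 hr.2)).hasDerivWithinAt)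
    ((integrableOn_Icc_iff_integrableOn_Ioo).2 (integrableOn_bridgeOp hmeas hbd))
    (fun r hr => by
      have hop : bridgeOp subsol t y r = Real.exp (r / 2) *
          ∫ z, sech (bridge r t y z) * sech (bridge r t y z) ^ 2 ∂stdN := by
        rw [bridgeOp, ← integral_const_mul]
        simp only [subsol, mul_assoc]
      rw [hop, mul_assoc, ← mul_add]
      exact mul_le_mul_of_nonneg_left (deriv_bound y hr.1 hr.2) (Real.exp_pos _).le)
  rw [intervalIntegral.integral_of_le ht.le, integral_Ioc_eq_integral_Ioo] at h
  have hr0 (z : ℝ) : bridge 0 t y z = 0 := by simp [bridge]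
  have hrt (z : ℝ) : bridge t t y z = y := by simp [bridge, ht.ne']
  simp only [hr0, hrt, sech_zero] at h
  simp at h
  rw [subsol]
  linarith

/-! ### Comparison with the series -/

/-- Iteration of `subsol_le`: each Duhamel step is monotone and gains a factor `t / (N + 1)` in the
remainder. -/
lemma subsol_le_sum (T : ℝ) (N : ℕ) : ∀ {t : ℝ} (y : ℝ), 0 < t → t ≤ T →
    subsol t y ≤ ∑ n ∈ Finset.range N, bridgeTerm n t y
      + Real.exp (T / 2) * (t ^ N / N.factorial) := by
  induction N with
  | zero =>
    intro t y ht htT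
    simp only [Finset.range_zero, Finset.sum_empty, zero_add, pow_zero, Nat.factorial_zero,
      Nat.cast_one, div_one, mul_one]
    refine (mul_le_of_le_one_right (Real.exp_pos _).le (sech_le_one y)).trans ?_
    gcongr
  | succ N ih =>
    intro t y ht htT
    have hsmeas : Measurable fun q : ℝ × ℝ => subsol q.1 q.2 := by
      unfold subsol
      have := continuous_sech.measurable
      fun_prop
    have hsb (r : ℝ) (hr : r ∈ Set.Ioo 0 t) (x : ℝ) : |subsol r x| ≤ Real.exp (t / 2) := by
      have := sech_pos x
      rw [subsol, abs_of_pos (by positivity)]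
      have := hr.2
      refine (mul_le_of_le_one_right (Real.exp_pos _).le (sech_le_one x)).trans ?_
      gcongr
    have htb (n : ℕ) (r : ℝ) (hr : r ∈ Set.Ioo 0 t) (x : ℝ) :
        |bridgeTerm n r x| ≤ t ^ n / n.factorial := by
      rw [abs_of_nonneg (bridgeTerm_bounds n x hr.1.le).1]
      have := hr.1.le
      have := hr.2.le
      refine (bridgeTerm_bounds n x hr.1.le).2.trans ?_
      gcongr
    have hkey (r : ℝ) (hr : r ∈ Set.Ioo 0 t) : bridgeOp subsol t y r ≤
        ∑ n ∈ Finset.range N, bridgeOp (bridgeTerm n) t y r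
          + Real.exp (T / 2) * (r ^ N / N.factorial) := by
      have hr0 := hr.1
      have ii (n : ℕ) := integrable_bridge (measurable_bridgeTerm n) (t := t) (y := y) (htb n r hr)
      have hle : bridgeOp subsol t y r ≤ ∫ z, (∑ n ∈ Finset.range N,
          bridgeTerm n r (bridge r t y z) * sech (bridge r t y z) ^ 2
          + Real.exp (T / 2) * (r ^ N / N.factorial)) ∂stdN := by
        refine integral_mono (integrable_bridge hsmeas (hsb r hr))
          ((integrable_finsetSum _ fun n _ => ii n).add (integrable_const _)) fun z => ?_
        simp only
        have h1 := ih (bridge r t y z) hr0 (hr.2.le.trans htT)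
        have h2 := sech_pos (bridge r t y z)
        have h3 : sech (bridge r t y z) ^ 2 ≤ 1 := pow_le_one₀ h2.le (sech_le_one _)
        calc _ ≤ _ := mul_le_mul_of_nonneg_right h1 (sq_nonneg _)
          _ ≤ _ := by
            rw [add_mul, Finset.sum_mul]
            exact add_le_add_right (mul_le_of_le_one_right (by positivity) h3) _
      refine hle.trans_eq ?_
      rw [integral_add (integrable_finsetSum _ fun n _ => ii n) (integrable_const _),
        integral_finsetSum _ fun n _ => ii n]
      simp [bridgeOp]
    have hI (n : ℕ) := integrableOn_bridgeOp (measurable_bridgeTerm n) (y := y) (htb n)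
    have hpow := (integrableOn_pow_div_factorial N t).const_mul (Real.exp (T / 2))
    have hle := setIntegral_mono_on (integrableOn_bridgeOp hsmeas (y := y) hsb)
      ((integrable_finsetSum (Finset.range N) fun n _ => hI n).add hpow) measurableSet_Ioo hkey
    have hsplit := integral_add (integrable_finsetSum (Finset.range N) fun n _ => hI n) hpow
    rw [integral_finsetSum _ fun n _ => hI n, integral_const_mul,
      setIntegral_pow_div_factorial N ht.le] at hsplit
    have h1 := subsol_le y ht
    rw [Finset.sum_range_succ']
    simp only [Pi.add_apply] at hle
    have hR (n : ℕ) : bridgeTerm (n + 1) t y = ∫ r in Set.Ioo 0 t, bridgeOp (bridgeTerm n) t y r :=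
      rfl
    simp only [hR, show bridgeTerm 0 t y = 1 from rfl]
    linarith

/-- At the origin the subsolution is `e^{t/2} p(t, 0)`, because `sech 0 = 1`. -/
lemma le_Zsol {t : ℝ} (ht : 0 < t) :
    heatK t 0 * Real.exp (t / 2) ≤ Zsol (fun _ z => sech z ^ 2) t 0 := by
  have hsum : Summable fun n => bridgeTerm n t 0 :=
    Summable.of_nonneg_of_le (fun n => (bridgeTerm_bounds n 0 ht.le).1)
      (fun n => (bridgeTerm_bounds n 0 ht.le).2) (Real.summable_pow_div_factorial t)
  have hlim := hsum.hasSum.tendsto_sum_nat.add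
    ((FloorSemiring.tendsto_pow_div_factorial_atTop t).const_mul (Real.exp (t / 2)))
  have hle := ge_of_tendsto' hlim fun N => subsol_le_sum t N 0 ht le_rfl
  rw [Zsol, kerP]
  simp only [kernelTerm_eq _ _ ht]
  rw [tsum_mul_right, mul_comm]
  refine mul_le_mul_of_nonneg_right ?_ (by unfold heatK; positivity)
  simpa [subsol, sech_zero] using hle

/-- The bound holds at every finite `l`, not only in the limit. -/
lemma infExpr_le {l : ℝ} (hl : 0 < l) : infExpr l ≤ 4 / 3 := by
  refine csInf_le ⟨0, ?_⟩ ⟨fun _ z => sech z ^ 2, (l2sq_sech l hl).1, ?_, ?_⟩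
  · rintro c ⟨ρ, -, -, rfl⟩
    have : 0 ≤ l2sq ρ 0 (2 * l) := integral_nonneg fun _ => sq_nonneg _
    positivity
  · have h := le_Zsol (t := 2 * l) (by positivity)
    have e : heatK (2 * l) 0 * Real.exp (2 * l / 2)
        = (Real.sqrt (4 * Real.pi * l))⁻¹ * Real.exp l := by
      rw [heatK, show 2 * Real.pi * (2 * l) = 4 * Real.pi * l by ring,
        show 2 * l / 2 = l by ring]
      simp
    exact e ▸ h
  · rw [(l2sq_sech l hl).2]
    field_simp

/-- `LimSup`: the limsup of the scaled variational infimum is at most `4/3`. -/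
theorem limsup_scaled_infimum_le :
    Filter.limsup infExpr Filter.atTop ≤ 4 / 3 := by
  have hlow : ∀ᶠ l in atTop, 0 ≤ infExpr l := by
    filter_upwards [eventually_gt_atTop 0] with l hl
    refine Real.sInf_nonneg ?_
    rintro c ⟨ρ, -, -, rfl⟩
    have : 0 ≤ l2sq ρ 0 (2 * l) := integral_nonneg fun _ => sq_nonneg _
    positivity
  -- in `ℝ` the `limsup` is meaningful only with an eventual lower bound
  refine limsup_le_of_le (isBoundedUnder_of_eventually_ge hlow).isCoboundedUnder_le ?_
  filter_upwards [eventually_gt_atTop 0] with l hl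
  exact infExpr_le hl
end

section
/- There exists a universal constant C such that for all 0 ≤ s < t, all a > 0, and all ρ ∈ L²([s,t]×ℝ), one has ‖P(ρ; (s,0) → (t,·))‖_{L²(ℝ)} ≤ C (t−s)^{-1/4} exp( a² C (t−s) + a^{-1} ‖ρ‖²_{L²([s,t]×ℝ)} ), and likewise ‖P(ρ; (s,·) → (t,0))‖_{L²(ℝ)} ≤ C (t−s)^{-1/4} exp( a² C (t−s) + a^{-1} ‖ρ‖²_{L²([s,t]×ℝ)} ). -/
/-!
The `n`-th Duhamel term is dominated by an iterate `duh` in which `ρ` is replaced by a measurable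
version of `|ρ|` and all integrals take values in `[0,∞]` (`enorm_kernelTerm_le`), so neither
measurability of `ρ` itself nor convergence of the Bochner integrals has to be discussed.

Let `F n t` be the squared `L²` norm in `y` of the `n`-th iterate from `p = (s,x)` to `(t,y)`, and
let `g r = ‖ρ(r,·)‖²`. For any weight `w(r) > 0`, one Cauchy–Schwarz inequality in space-time and
`‖p(τ,·)‖² ≤ 1/(2√τ)` give
`F (n+1) t ≤ (∫ F n r · w(r) / (2√(t-r)) dr) · (∫ g r / w(r) dr)`.
The weight `w(r) = exp((2/a) ∫_r^t g)` makes the second factor at most `a/2`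
(`lintegral_mul_exp_neg_le`). Inserting `F n r ≤ ½ 8⁻ⁿ (r-s)^{-1/2} exp(2l(r-s) + (2/a) ∫_s^r g)`
with `l = 100a²`, the first factor reduces to the Beta-type integral
`∫ (r-s)^{-1/2} (t-r)^{-1/2} e^{-2l(t-r)} dr ≤ 5 (l(t-s))^{-1/2}` (`lintegral_beta_le`), so the same
bound holds for `n + 1` (`lintegral_duh_sq_le`). The geometric decay allows summation over `n`.

The bound in the initial variable follows from the one in the final variable, because reversing
space-time exchanges the two end points of an iterate (`duh_reflect`).
-/

open MeasureTheory Real Filter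

open Set
open scoped ENNReal

/-! ### Scalar estimates -/

/-- Cauchy–Schwarz for the lower Lebesgue integral. -/
lemma lintegral_mul_sq_le {α : Type*} [MeasurableSpace α] (μ : Measure α) {f g : α → ℝ≥0∞}
    (hf : AEMeasurable f μ) (hg : AEMeasurable g μ) :
    (∫⁻ x, f x * g x ∂μ) ^ 2 ≤ (∫⁻ x, f x ^ 2 ∂μ) * ∫⁻ x, g x ^ 2 ∂μ := by
  have h := ENNReal.lintegral_mul_le_Lp_mul_Lq μ Real.HolderConjugate.two_two hf hg
  simp only [Pi.mul_apply, ENNReal.rpow_ofNat] at h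
  refine (pow_le_pow_left₀ zero_le h 2).trans (le_of_eq ?_)
  rw [mul_pow, ← ENNReal.rpow_two, ← ENNReal.rpow_two, ← ENNReal.rpow_mul, ← ENNReal.rpow_mul]
  norm_num

lemma tsum_sq_le (f : ℕ → ℝ≥0∞) : (∑' n, f n) ^ 2 ≤ 2 * ∑' n, 4 ^ n * f n ^ 2 := by
  have h := lintegral_mul_sq_le (Measure.count : Measure ℕ)
    (f := fun n => (2⁻¹ : ℝ≥0∞) ^ n) (g := fun n => 2 ^ n * f n)
    (measurable_of_countable _).aemeasurable (measurable_of_countable _).aemeasurable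
  simp only [lintegral_count] at h
  have h1 : ∀ n, (2⁻¹ : ℝ≥0∞) ^ n * (2 ^ n * f n) = f n := fun n => by
    rw [← mul_assoc, ← mul_pow, ENNReal.inv_mul_cancel (by norm_num) (by norm_num), one_pow, one_mul]
  have h2 : ∀ n, (2 ^ n * f n) ^ 2 = 4 ^ n * f n ^ 2 := fun n => by
    rw [mul_pow, ← pow_mul, mul_comm n 2, pow_mul]; norm_num
  simp only [h1, h2] at h
  refine h.trans ?_
  gcongr
  calc ∑' n, ((2⁻¹ : ℝ≥0∞) ^ n) ^ 2 ≤ ∑' n, (2⁻¹ : ℝ≥0∞) ^ n := by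
        refine ENNReal.tsum_le_tsum fun n => ?_
        rw [sq]
        exact mul_le_of_le_one_left zero_le (pow_le_one₀ zero_le (by simp))
    _ = 2 := by rw [ENNReal.tsum_geometric, ENNReal.one_sub_inv_two, inv_inv]

/-- Integrating `g e^{-c ∫_r^t g}` exactly would need the chain rule for absolutely continuous
functions; for the upper bound it is enough that the monotone function
`r ↦ e^{-c ∫_r^t g}` increases by at least the integral of its a.e. derivative. -/
lemma lintegral_mul_exp_neg_le {g : ℝ → ℝ} (hg : Integrable g) (h0 : ∀ r, 0 ≤ g r)
    {c s t : ℝ} (hc : 0 < c) (hst : s ≤ t) :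
    ∫⁻ r in Ioo s t, ENNReal.ofReal (g r) * ENNReal.ofReal (exp (-(c * ∫ x in r..t, g x)))
      ≤ ENNReal.ofReal c⁻¹ := by
  set E : ℝ → ℝ := fun r => exp (-(c * ∫ x in r..t, g x)) with hE
  have hii : ∀ a b, IntervalIntegrable g volume a b := fun a b => hg.intervalIntegrable
  have hmono : MonotoneOn E (uIcc s t) := by
    intro u _ v _ huv
    have := intervalIntegral.integral_add_adjacent_intervals (hii u v) (hii v t)
    have h1 : 0 ≤ ∫ x in u..v, g x := intervalIntegral.integral_nonneg huv fun x _ => h0 x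
    simp only [hE]
    gcongr
    linarith
  have hd : ∀ᵐ r, deriv E r = c * (g r * E r) := by
    filter_upwards [LocallyIntegrable.ae_hasDerivAt_integral hg.locallyIntegrable] with r hr
    have h1 : HasDerivAt (fun r => ∫ x in r..t, g x) (-g r) r := by
      have := (hr t).neg
      refine this.congr_of_eventuallyEq (Eventually.of_forall fun x => ?_)
      simp [intervalIntegral.integral_symm x t]
    have h2 : HasDerivAt E (E r * -(c * -g r)) r := ((h1.const_mul c).neg).exp
    rw [h2.deriv]
    ring
  have hint := hmono.intervalIntegrable_deriv
  have hle := hmono.intervalIntegral_deriv_mem_uIcc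
  have hEs : E s ≤ E t := hmono (by simp) (by simp) hst
  have hEt : E t = 1 := by simp [hE]
  rw [uIcc_of_le (by linarith)] at hle
  have hE0 : 0 < E s := exp_pos _
  rw [intervalIntegrable_iff_integrableOn_Ioo_of_le hst] at hint
  rw [intervalIntegral.integral_of_le hst, integral_Ioc_eq_integral_Ioo] at hle
  have hint' : IntegrableOn (fun r => g r * E r) (Ioo s t) := by
    have := hint.const_mul c⁻¹
    refine this.congr ?_
    filter_upwards [ae_restrict_of_ae hd] with r hr
    rw [hr]; field_simp
  have heq : ∫ r in Ioo s t, deriv E r = c * ∫ r in Ioo s t, g r * E r := by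
    rw [← integral_const_mul]
    exact integral_congr_ae (ae_restrict_of_ae hd)
  calc _ = ∫⁻ r in Ioo s t, ENNReal.ofReal (g r * E r) := by
        refine lintegral_congr fun r => ?_
        rw [ENNReal.ofReal_mul (h0 r)]
    _ = ENNReal.ofReal (∫ r in Ioo s t, g r * E r) := by
        rw [ofReal_integral_eq_lintegral_ofReal hint']
        exact Eventually.of_forall fun r => mul_nonneg (h0 r) (exp_pos _).le
    _ ≤ _ := by
        apply ENNReal.ofReal_le_ofReal
        rw [← one_div, le_div_iff₀ hc]
        linarith [hle.2]

lemma lintegral_exp_decay_le {l t : ℝ} (s : ℝ) (hl : 0 < l) :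
    ∫⁻ r in Ioo s t, ENNReal.ofReal (exp (-(2 * l * (t - r)))) ≤ ENNReal.ofReal (2 * l)⁻¹ := by
  rcases le_or_gt t s with h | h
  · simp [Ioo_eq_empty (not_lt.mpr h)]
  have hd : ∀ x ∈ uIcc s t, HasDerivAt (fun r => (2 * l)⁻¹ * exp (-(2 * l * (t - r))))
      (exp (-(2 * l * (t - x)))) x := by
    intro x _
    have h1 : HasDerivAt (fun r => -(2 * l * (t - r))) (2 * l) x := by
      have := (((hasDerivAt_id x).const_sub t).const_mul (2 * l)).neg
      exact this.congr_deriv (by ring)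
    exact (h1.exp.const_mul (2 * l)⁻¹).congr_deriv (by field_simp)
  have hc : Continuous fun r => exp (-(2 * l * (t - r))) := by fun_prop
  have := intervalIntegral.integral_eq_sub_of_hasDerivAt hd (hc.intervalIntegrable _ _)
  rw [intervalIntegral.integral_of_le h.le, integral_Ioc_eq_integral_Ioo] at this
  rw [← ofReal_integral_eq_lintegral_ofReal, this]
  · apply ENNReal.ofReal_le_ofReal
    have : 0 < (2 * l)⁻¹ * exp (-(2 * l * (t - s))) := by positivity
    simp only [sub_self, mul_zero, neg_zero, exp_zero, mul_one]
    linarith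
  · exact (hc.integrableOn_Icc (a := s) (b := t)).mono_set Ioo_subset_Icc_self
  · exact Eventually.of_forall fun r => (exp_pos _).le

lemma lintegral_inv_sqrt_le {b : ℝ} (hb : 0 ≤ b) :
    ∫⁻ v in Ioo 0 b, ENNReal.ofReal (√v)⁻¹ ≤ ENNReal.ofReal (2 * √b) := by
  have h1 : ∫ v in (0 : ℝ)..b, v ^ (-(1 / 2) : ℝ) = 2 * √b := by
    rw [integral_rpow (by left; norm_num)]
    norm_num [Real.sqrt_eq_rpow]
    ring
  have h2 : IntervalIntegrable (fun v : ℝ => v ^ (-(1 / 2) : ℝ)) volume 0 b :=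
    intervalIntegral.intervalIntegrable_rpow' (by norm_num)
  rw [intervalIntegral.integral_of_le hb, integral_Ioc_eq_integral_Ioo] at h1
  rw [intervalIntegrable_iff_integrableOn_Ioo_of_le hb] at h2
  rw [← h1, ofReal_integral_eq_lintegral_ofReal h2]
  · refine (setLIntegral_mono' measurableSet_Ioo fun v hv => ?_)
    rw [Real.sqrt_eq_rpow, Real.rpow_neg hv.1.le]
  · filter_upwards [ae_restrict_mem measurableSet_Ioo] with v hv
    exact Real.rpow_nonneg hv.1.le _

/-- Pointwise splitting behind the Beta-type integral: from
`√(t-s) ≤ √(r-s) + √(t-r)`, and then `1/√v ≤ √l + 1_{v < 1/l}/√v` for both singularities. -/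
lemma beta_pointwise {s t l r : ℝ} (hl : 0 < l) (hr : r ∈ Ioo s t) :
    (√(r - s))⁻¹ * (√(t - r))⁻¹ * exp (-(2 * l * (t - r))) ≤
      (√(t - s))⁻¹ * (2 * √l * exp (-(2 * l * (t - r))) +
        ((Ioo 0 l⁻¹).indicator (fun v => (√v)⁻¹) (r - s) +
          (Ioo 0 l⁻¹).indicator (fun v => (√v)⁻¹) (t - r))) := by
  have hu : 0 < √(r - s) := Real.sqrt_pos.mpr (by linarith [hr.1])
  have hv : 0 < √(t - r) := Real.sqrt_pos.mpr (by linarith [hr.2])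
  have hw : 0 < √(t - s) := Real.sqrt_pos.mpr (by linarith [hr.1, hr.2])
  have htri : √(t - s) ≤ √(r - s) + √(t - r) := by
    rw [Real.sqrt_le_left (by positivity), add_sq, Real.sq_sqrt (by linarith [hr.1]),
      Real.sq_sqrt (by linarith [hr.2])]
    nlinarith [mul_pos hu hv]
  have hsplit : (√(r - s))⁻¹ * (√(t - r))⁻¹ ≤
      (√(t - s))⁻¹ * ((√(r - s))⁻¹ + (√(t - r))⁻¹) := by
    rw [inv_add_inv hu.ne' hv.ne', ← mul_inv, ← div_eq_inv_mul, le_div_iff₀ hw, inv_mul_eq_div]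
    gcongr
  set e := exp (-(2 * l * (t - r))) with he
  have he0 : 0 < e := exp_pos _
  have he1 : e ≤ 1 := by
    apply Real.exp_le_one_iff.mpr
    have : 0 ≤ 2 * l * (t - r) := by have := hr.2; have : 0 ≤ t - r := by linarith
                                     positivity
    linarith
  have key : ∀ v : ℝ, 0 < v → (√v)⁻¹ * e ≤
      √l * e + (Ioo 0 l⁻¹).indicator (fun v => (√v)⁻¹) v := by
    intro v hv
    by_cases h : v < l⁻¹
    · rw [indicator_of_mem (show v ∈ Ioo 0 l⁻¹ from ⟨hv, h⟩)]
      have : (√v)⁻¹ * e ≤ (√v)⁻¹ := mul_le_of_le_one_right (by positivity) he1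
      have : 0 ≤ √l * e := by positivity
      linarith
    · rw [indicator_of_notMem (fun hh => h hh.2), add_zero]
      gcongr
      rw [← Real.sqrt_inv]
      apply Real.sqrt_le_sqrt
      exact inv_le_of_inv_le₀ hl (not_lt.mp h)
  have k1 := key (r - s) (by linarith [hr.1])
  have k2 := key (t - r) (by linarith [hr.2])
  calc _ ≤ (√(t - s))⁻¹ * ((√(r - s))⁻¹ + (√(t - r))⁻¹) * e := by gcongr
    _ = (√(t - s))⁻¹ * ((√(r - s))⁻¹ * e + (√(t - r))⁻¹ * e) := by ring
    _ ≤ _ := mul_le_mul_of_nonneg_left (by linarith) (by positivity)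

lemma lintegral_beta_le {s t l : ℝ} (hl : 0 < l) :
    ∫⁻ r in Ioo s t, ENNReal.ofReal ((√(r - s))⁻¹ * (√(t - r))⁻¹ * exp (-(2 * l * (t - r))))
      ≤ ENNReal.ofReal (5 * (√l)⁻¹ * (√(t - s))⁻¹) := by
  set J : ℝ → ℝ≥0∞ := fun v => ENNReal.ofReal ((Ioo 0 l⁻¹).indicator (fun v => (√v)⁻¹) v) with hJ
  have hJm : Measurable J := by
    refine ENNReal.measurable_ofReal.comp (Measurable.indicator ?_ measurableSet_Ioo)
    fun_prop
  have hJi : ∫⁻ v, J v ≤ ENNReal.ofReal (2 * (√l)⁻¹) := by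
    have : J = (Ioo 0 l⁻¹).indicator (fun v => ENNReal.ofReal (√v)⁻¹) := by
      ext v; by_cases h : v ∈ Ioo 0 l⁻¹ <;> simp [hJ, h]
    rw [this, lintegral_indicator measurableSet_Ioo]
    refine (lintegral_inv_sqrt_le (by positivity)).trans (le_of_eq ?_)
    rw [Real.sqrt_inv]
  have hJ1 : ∫⁻ r in Ioo s t, J (r - s) ≤ ENNReal.ofReal (2 * (√l)⁻¹) := by
    refine (setLIntegral_le_lintegral _ _).trans ?_
    rwa [lintegral_sub_right_eq_self J s]
  have hJ2 : ∫⁻ r in Ioo s t, J (t - r) ≤ ENNReal.ofReal (2 * (√l)⁻¹) := by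
    refine (setLIntegral_le_lintegral _ _).trans ?_
    rwa [lintegral_sub_left_eq_self J t]
  have hind : ∀ v, 0 ≤ (Ioo 0 l⁻¹).indicator (fun v => (√v)⁻¹) v := fun v =>
    indicator_nonneg (fun v _ => by positivity) v
  calc _ ≤ ∫⁻ r in Ioo s t, ENNReal.ofReal (√(t - s))⁻¹ *
        (ENNReal.ofReal (2 * √l) * ENNReal.ofReal (exp (-(2 * l * (t - r)))) +
          (J (r - s) + J (t - r))) := by
        refine setLIntegral_mono' measurableSet_Ioo fun r hr => ?_
        refine (ENNReal.ofReal_le_ofReal (beta_pointwise hl hr)).trans (le_of_eq ?_)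
        rw [ENNReal.ofReal_mul (by positivity), ENNReal.ofReal_add (by positivity)
          (add_nonneg (hind _) (hind _)), ENNReal.ofReal_add (hind _) (hind _),
          ENNReal.ofReal_mul (by positivity)]
    _ = ENNReal.ofReal (√(t - s))⁻¹ *
        (ENNReal.ofReal (2 * √l) * (∫⁻ r in Ioo s t, ENNReal.ofReal (exp (-(2 * l * (t - r))))) +
          ((∫⁻ r in Ioo s t, J (r - s)) + ∫⁻ r in Ioo s t, J (t - r))) := by
        rw [lintegral_const_mul _ (by fun_prop), lintegral_add_left (by fun_prop),
          lintegral_const_mul _ (by fun_prop), lintegral_add_left (by fun_prop)]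
    _ ≤ ENNReal.ofReal (√(t - s))⁻¹ *
        (ENNReal.ofReal (2 * √l) * ENNReal.ofReal (2 * l)⁻¹ +
          (ENNReal.ofReal (2 * (√l)⁻¹) + ENNReal.ofReal (2 * (√l)⁻¹))) := by
        gcongr
        exact lintegral_exp_decay_le s hl
    _ = _ := by
        rw [← ENNReal.ofReal_mul (by positivity), ← ENNReal.ofReal_add (by positivity)
          (by positivity), ← ENNReal.ofReal_add (by positivity) (by positivity),
          ← ENNReal.ofReal_mul (by positivity)]
        congr 1
        have h : √l * √l = l := Real.mul_self_sqrt hl.le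
        have h2 : 2 * √l * (2 * l)⁻¹ = (√l)⁻¹ := by
          have : 0 < √l := Real.sqrt_pos.mpr hl
          field_simp
          rw [sq, h]
        rw [h2]; ring

/-! ### Duhamel iterates with values in `[0,∞]` -/

/-- The heat kernel as a function on space-time with values in `[0,∞]`, extended by zero to
nonpositive times. The extension encodes the time ordering of the Duhamel integrals. -/
noncomputable def hk (w : ℝ × ℝ) : ℝ≥0∞ :=
  if 0 < w.1 then ENNReal.ofReal (heatK w.1 w.2) else 0

/-- The Duhamel iterates with nonnegative potential `ρ`, as integrals over all of space-time. The
point `p` is the starting point and `q` the end point. -/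
noncomputable def duh (ρ : ℝ × ℝ → ℝ≥0∞) : ℕ → ℝ × ℝ → ℝ × ℝ → ℝ≥0∞
  | 0, p, q => hk (q - p)
  | n + 1, p, q => ∫⁻ w, duh ρ n p w * ρ w * hk (q - w)

lemma heatK_nonneg (t x : ℝ) : 0 ≤ heatK t x := by unfold heatK; positivity

lemma heatK_neg (t x : ℝ) : heatK t (-x) = heatK t x := by simp [heatK]

lemma measurable_hk : Measurable hk := by
  refine Measurable.ite (measurableSet_lt measurable_const measurable_fst) ?_ measurable_const
  unfold heatK
  fun_prop

lemma hk_of_le {w : ℝ × ℝ} (h : w.1 ≤ 0) : hk w = 0 := if_neg (not_lt.mpr h)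

lemma measurable_duh_uncurry {ρ : ℝ × ℝ → ℝ≥0∞} (hρ : Measurable ρ) (n : ℕ) :
    Measurable fun x : (ℝ × ℝ) × (ℝ × ℝ) => duh ρ n x.1 x.2 := by
  induction n with
  | zero => exact measurable_hk.comp (measurable_snd.sub measurable_fst)
  | succ n ih =>
    simp only [duh]
    refine Measurable.lintegral_prod_right' (f := fun x : ((ℝ × ℝ) × (ℝ × ℝ)) × (ℝ × ℝ) =>
      duh ρ n x.1.1 x.2 * ρ x.2 * hk (x.1.2 - x.2)) ?_
    refine Measurable.mul (Measurable.mul ?_ (hρ.comp measurable_snd)) ?_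
    · exact ih.comp ((measurable_fst.comp measurable_fst).prodMk measurable_snd)
    · exact measurable_hk.comp ((measurable_snd.comp measurable_fst).sub measurable_snd)

lemma measurable_duh {ρ : ℝ × ℝ → ℝ≥0∞} (hρ : Measurable ρ) (n : ℕ) {α : Type*}
    [MeasurableSpace α] {f g : α → ℝ × ℝ} (hf : Measurable f) (hg : Measurable g) :
    Measurable fun x => duh ρ n (f x) (g x) :=
  (measurable_duh_uncurry hρ n).comp (hf.prodMk hg)

lemma duh_of_le (ρ : ℝ × ℝ → ℝ≥0∞) (n : ℕ) {p q : ℝ × ℝ} (h : q.1 ≤ p.1) :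
    duh ρ n p q = 0 := by
  induction n generalizing q with
  | zero => exact hk_of_le (by simpa using h)
  | succ n ih =>
    simp only [duh]
    refine (lintegral_congr fun w => ?_).trans lintegral_zero
    rcases le_or_gt w.1 p.1 with hw | hw
    · simp [ih hw]
    · rw [hk_of_le (by simpa using h.trans hw.le), mul_zero]

lemma duh_succ_strip (ρ : ℝ × ℝ → ℝ≥0∞) (n : ℕ) (p q : ℝ × ℝ) :
    duh ρ (n + 1) p q = ∫⁻ w, duh ρ n p w * ρ w * hk (q - w)
      ∂((volume.restrict (Ioo p.1 q.1)).prod (volume : Measure ℝ)) := by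
  have : (volume.restrict (Ioo p.1 q.1)).prod (volume : Measure ℝ) =
      (volume : Measure (ℝ × ℝ)).restrict (Ioo p.1 q.1 ×ˢ univ) := by
    rw [Measure.volume_eq_prod, ← Measure.prod_restrict, Measure.restrict_univ]
  rw [this, ← lintegral_indicator (measurableSet_Ioo.prod MeasurableSet.univ)]
  simp only [duh]
  refine lintegral_congr fun w => ?_
  by_cases hw : w ∈ Ioo p.1 q.1 ×ˢ (univ : Set ℝ)
  · rw [indicator_of_mem hw]
  · rw [indicator_of_notMem hw]
    by_cases h1 : p.1 < w.1
    · have h2 : q.1 ≤ w.1 := not_lt.mp fun h => hw ⟨⟨h1, h⟩, mem_univ _⟩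
      rw [hk_of_le (by simpa using h2), mul_zero]
    · rw [duh_of_le ρ n (not_lt.mp h1), zero_mul, zero_mul]

/-- The defining recursion peels off the last time step; by Tonelli one may equally peel off the
first one. -/
lemma duh_succ_left {ρ : ℝ × ℝ → ℝ≥0∞} (hρ : Measurable ρ) (n : ℕ) (p q : ℝ × ℝ) :
    duh ρ (n + 1) p q = ∫⁻ w, hk (w - p) * ρ w * duh ρ n w q := by
  induction n generalizing q with
  | zero => simp only [duh]
  | succ n ih =>
    rw [duh]
    have hm : Measurable fun x : (ℝ × ℝ) × (ℝ × ℝ) =>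
        hk (x.2 - p) * ρ x.2 * duh ρ n x.2 x.1 * ρ x.1 * hk (q - x.1) := by
      have h1 := measurable_duh hρ n (measurable_snd (α := ℝ × ℝ) (β := ℝ × ℝ)) measurable_fst
      have := measurable_hk
      fun_prop
    calc ∫⁻ w, duh ρ (n + 1) p w * ρ w * hk (q - w)
        = ∫⁻ w, ∫⁻ v, hk (v - p) * ρ v * duh ρ n v w * ρ w * hk (q - w) := by
          refine lintegral_congr fun w => ?_
          have h1 := measurable_duh hρ n measurable_id (measurable_const (a := w))
          have := measurable_hk
          simp only [id] at h1
          rw [ih w, lintegral_mul_const _ (by fun_prop), lintegral_mul_const _ (by fun_prop)]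
      _ = ∫⁻ v, ∫⁻ w, hk (v - p) * ρ v * duh ρ n v w * ρ w * hk (q - w) :=
          lintegral_lintegral_swap hm.aemeasurable
      _ = ∫⁻ v, hk (v - p) * ρ v * duh ρ (n + 1) v q := by
          refine lintegral_congr fun v => ?_
          have h1 := measurable_duh hρ n (measurable_const (a := v)) measurable_id
          have := measurable_hk
          simp only [id] at h1
          rw [duh, ← lintegral_const_mul _ (by fun_prop)]
          exact lintegral_congr fun w => by ring

/-- Reversal of space-time exchanges the roles of the two end points. -/
lemma duh_reflect {ρ : ℝ × ℝ → ℝ≥0∞} (hρ : Measurable ρ) (n : ℕ) (p q : ℝ × ℝ) :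
    duh (fun w => ρ (-w)) n (-q) (-p) = duh ρ n p q := by
  induction n generalizing p with
  | zero => simp only [duh]; congr 1; abel
  | succ n ih =>
    rw [duh_succ_left hρ, duh, ← lintegral_neg_eq_self]
    refine lintegral_congr fun w => ?_
    rw [ih, neg_neg, show -p - -w = w - p by abel]
    ring

lemma lintegral_hk_sq_le {τ : ℝ} (hτ : 0 < τ) (c : ℝ) :
    ∫⁻ y, hk (τ, y - c) ^ 2 ≤ ENNReal.ofReal (1 / 2 * (√τ)⁻¹) := by
  rw [lintegral_sub_right_eq_self (fun y => hk (τ, y) ^ 2) c]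
  have h0 : ∀ y, hk (τ, y) ^ 2 = ENNReal.ofReal ((2 * π * τ)⁻¹ * exp (-(1 / τ) * y ^ 2)) := by
    intro y
    have : heatK τ y ^ 2 = (2 * π * τ)⁻¹ * exp (-(1 / τ) * y ^ 2) := by
      rw [heatK, mul_pow, inv_pow, Real.sq_sqrt (by positivity), ← Real.exp_nat_mul]
      congr 2
      push_cast
      field_simp
    simp only [hk, hτ, if_true]
    rw [← ENNReal.ofReal_pow (heatK_nonneg _ _), this]
  simp only [h0]
  rw [← ofReal_integral_eq_lintegral_ofReal]
  · apply ENNReal.ofReal_le_ofReal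
    rw [integral_const_mul, integral_gaussian]
    have hs : 0 < √τ := Real.sqrt_pos.mpr hτ
    have e1 : π / (1 / τ) = π * τ := by field_simp
    have e2 : 2 * π * τ = 2 * (√π * √τ) * (√π * √τ) := by
      nlinarith [Real.mul_self_sqrt hτ.le, Real.mul_self_sqrt Real.pi_pos.le]
    have hp : 1 ≤ √π := by
      rw [Real.one_le_sqrt]; linarith [Real.pi_gt_three]
    rw [e1, e2, Real.sqrt_mul Real.pi_pos.le]
    have : (2 * (√π * √τ) * (√π * √τ))⁻¹ * (√π * √τ) = 1 / 2 * (√π)⁻¹ * (√τ)⁻¹ := by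
      have : 0 < √π := by linarith
      field_simp
    rw [this]
    have : (√π)⁻¹ ≤ 1 := inv_le_one_of_one_le₀ hp
    gcongr
    linarith
  · exact (integrable_exp_neg_mul_sq (by positivity)).const_mul _
  · exact Eventually.of_forall fun y => by positivity

lemma hk_apply {t x : ℝ} (h : 0 < t) : hk (t, x) = ENNReal.ofReal (heatK t x) := if_pos h

/-- The `[0,∞]`-valued iterates dominate the iterates built from Bochner integrals, whether or not
the latter integrals converge: a divergent Bochner integral is zero. -/
lemma enorm_kernelTerm_le {ρ : ℝ → ℝ → ℝ} {ρ' : ℝ × ℝ → ℝ≥0∞} (hρ' : Measurable ρ') {s T : ℝ}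
    (h : ∀ᵐ r, r ∈ Ioo s T → ∀ᵐ z, ‖ρ r z‖ₑ ≤ ρ' (r, z)) (x : ℝ) (n : ℕ) {t : ℝ} (hst : s < t)
    (htT : t ≤ T) (y : ℝ) : ‖kernelTerm ρ s x n t y‖ₑ ≤ duh ρ' n (s, x) (t, y) := by
  induction n generalizing t y with
  | zero =>
    simp only [kernelTerm, duh, Prod.mk_sub_mk]
    rw [hk_apply (by linarith), Real.enorm_of_nonneg (heatK_nonneg _ _), ← heatK_neg, neg_sub]
  | succ n ih =>
    have hm := measurable_duh hρ' n (measurable_const (a := (s, x))) measurable_id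
    have hm2 := measurable_hk
    simp only [id] at hm
    rw [duh_succ_strip, lintegral_prod _ (by fun_prop), kernelTerm]
    refine (enorm_integral_le_lintegral_enorm _).trans ?_
    refine lintegral_mono_ae ?_
    filter_upwards [ae_restrict_of_ae h, ae_restrict_mem measurableSet_Ioo] with r hr hrm
    refine (enorm_integral_le_lintegral_enorm _).trans ?_
    refine lintegral_mono_ae ?_
    filter_upwards [hr ⟨hrm.1, hrm.2.trans_le htT⟩] with z hz
    rw [enorm_mul, enorm_mul, Prod.mk_sub_mk, hk_apply (by linarith [hrm.2]),
      Real.enorm_of_nonneg (heatK_nonneg _ _)]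
    gcongr
    exact ih hrm.1 (hrm.2.le.trans htT) z

/-! ### Contraction in `L²` and summation -/

/-- The exponential weight is chosen so that each Duhamel step contracts by the factor `1/8`: in
the Cauchy–Schwarz inequality the weight `e^{-(2/a)∫_r^t g}` against `ρ²` yields a factor `a/2`,
the weight `e^{-200a²(t-r)}` yields the factor `5/(10a)` in the Beta-type integral, and the squared
`L²` norm of the heat kernel contributes the remaining `1/2`. -/
lemma lintegral_duh_sq_le {ρ : ℝ × ℝ → ℝ≥0∞} (hρ : Measurable ρ) {g : ℝ → ℝ} (hg : Integrable g)
    (h0 : ∀ r, 0 ≤ g r) (hφ : ∀ᵐ r, ∫⁻ z, ρ (r, z) ^ 2 = ENNReal.ofReal (g r)) {a : ℝ}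
    (ha : 0 < a) (p : ℝ × ℝ) (n : ℕ) {t : ℝ} (ht : p.1 < t) :
    ∫⁻ y, duh ρ n p (t, y) ^ 2 ≤ ENNReal.ofReal (1 / 2 * (1 / 8) ^ n * (√(t - p.1))⁻¹ *
      exp (2 * (100 * a ^ 2) * (t - p.1) + 2 / a * ∫ x in p.1..t, g x)) := by
  have hii : ∀ a b, IntervalIntegrable g volume a b := fun a b => hg.intervalIntegrable
  induction n generalizing t with
  | zero =>
    simp only [duh]
    refine (lintegral_hk_sq_le (sub_pos.mpr ht) p.2).trans (ENNReal.ofReal_le_ofReal ?_)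
    rw [pow_zero, mul_one]
    refine le_mul_of_one_le_right (by positivity) (Real.one_le_exp ?_)
    have h1 : 0 ≤ ∫ x in p.1..t, g x := intervalIntegral.integral_nonneg ht.le fun x _ => h0 x
    have h2 : 0 < t - p.1 := sub_pos.mpr ht
    positivity
  | succ n ih =>
    set s := p.1 with hs
    set I : ℝ → ℝ := fun r => ∫ x in r..t, g x with hI
    have hIm : Measurable I := by
      have h1 : Continuous fun r => ∫ x in t..r, g x :=
        intervalIntegral.continuous_primitive hii t
      have h2 : I = fun r => -∫ x in t..r, g x := by
        ext r; exact intervalIntegral.integral_symm _ _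
      rw [h2]
      exact h1.neg.measurable
    set e₁ : ℝ → ℝ≥0∞ := fun r => ENNReal.ofReal (exp (1 / a * I r)) with he₁
    set e₂ : ℝ → ℝ≥0∞ := fun r => ENNReal.ofReal (exp (-(1 / a * I r))) with he₂
    have hm₁ : Measurable e₁ := by fun_prop
    have hm₂ : Measurable e₂ := by fun_prop
    have h12 : ∀ r, e₁ r * e₂ r = 1 := fun r => by
      rw [he₁, he₂, ← ENNReal.ofReal_mul (exp_pos _).le, ← Real.exp_add]; simp
    have hsq₁ : ∀ r, e₁ r ^ 2 = ENNReal.ofReal (exp (2 / a * I r)) := fun r => by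
      rw [he₁, ← ENNReal.ofReal_pow (exp_pos _).le, ← Real.exp_nat_mul]
      congr 2; push_cast; ring
    have hsq₂ : ∀ r, e₂ r ^ 2 = ENNReal.ofReal (exp (-(2 / a * I r))) := fun r => by
      rw [he₂, ← ENNReal.ofReal_pow (exp_pos _).le, ← Real.exp_nat_mul]
      congr 2; push_cast; ring
    set m := (volume.restrict (Ioo s t)).prod (volume : Measure ℝ) with hm
    have hk' := measurable_hk
    have hd : Measurable fun w => duh ρ n p w := measurable_duh hρ n measurable_const measurable_id
    have hY : ∫⁻ w, (ρ w * e₂ w.1) ^ 2 ∂m ≤ ENNReal.ofReal (a / 2) := by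
      rw [hm, lintegral_prod _ (by fun_prop)]
      calc _ = ∫⁻ r in Ioo s t,
            ENNReal.ofReal (g r) * ENNReal.ofReal (exp (-(2 / a * I r))) := by
            refine lintegral_congr_ae ?_
            filter_upwards [ae_restrict_of_ae hφ] with r hr
            simp only [mul_pow]
            rw [lintegral_mul_const _ (by fun_prop), hr, hsq₂]
        _ ≤ _ := (lintegral_mul_exp_neg_le hg h0 (by positivity) ht.le).trans_eq
            (by rw [inv_div])
    have hX : ∀ y, duh ρ (n + 1) p (t, y) ^ 2 ≤
        (∫⁻ w, (duh ρ n p w * hk ((t, y) - w) * e₁ w.1) ^ 2 ∂m) * ENNReal.ofReal (a / 2) := by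
      intro y
      have : duh ρ (n + 1) p (t, y) =
          ∫⁻ w, (duh ρ n p w * hk ((t, y) - w) * e₁ w.1) * (ρ w * e₂ w.1) ∂m := by
        rw [duh_succ_strip]
        refine lintegral_congr fun w => ?_
        calc _ = duh ρ n p w * ρ w * hk ((t, y) - w) * (e₁ w.1 * e₂ w.1) := by
              rw [h12, mul_one]
          _ = _ := by ring
      rw [this]
      refine (lintegral_mul_sq_le m (by fun_prop) (by fun_prop)).trans ?_
      gcongr
    calc ∫⁻ y, duh ρ (n + 1) p (t, y) ^ 2
        ≤ ∫⁻ y, (∫⁻ w, (duh ρ n p w * hk ((t, y) - w) * e₁ w.1) ^ 2 ∂m) *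
            ENNReal.ofReal (a / 2) := lintegral_mono hX
      _ = (∫⁻ w, (∫⁻ y, (duh ρ n p w * hk ((t, y) - w) * e₁ w.1) ^ 2) ∂m) *
            ENNReal.ofReal (a / 2) := by
          rw [lintegral_mul_const' _ _ ENNReal.ofReal_ne_top]
          congr 1
          refine lintegral_lintegral_swap (Measurable.aemeasurable ?_)
          have : Measurable fun x : ℝ × (ℝ × ℝ) => duh ρ n p x.2 := hd.comp measurable_snd
          unfold Function.uncurry
          fun_prop
      _ ≤ (∫⁻ r in Ioo s t, ENNReal.ofReal (1 / 4 * (1 / 8) ^ n *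
            exp (2 * (100 * a ^ 2) * (t - s) + 2 / a * ∫ x in s..t, g x)) *
            ENNReal.ofReal ((√(r - s))⁻¹ * (√(t - r))⁻¹ *
              exp (-(2 * (100 * a ^ 2) * (t - r))))) * ENNReal.ofReal (a / 2) := by
          gcongr ?_ * _
          rw [hm, lintegral_prod]
          swap
          · refine Measurable.aemeasurable (Measurable.lintegral_prod_right' (f := fun x :
              (ℝ × ℝ) × ℝ => (duh ρ n p x.1 * hk ((t, x.2) - x.1) * e₁ x.1.1) ^ 2) ?_)
            have : Measurable fun x : (ℝ × ℝ) × ℝ => duh ρ n p x.1 := hd.comp measurable_fst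
            fun_prop
          refine setLIntegral_mono' measurableSet_Ioo fun r hr => ?_
          have hdr : Measurable fun z => duh ρ n p (r, z) :=
            hd.comp (measurable_const.prodMk measurable_id)
          calc ∫⁻ z, ∫⁻ y, (duh ρ n p (r, z) * hk ((t, y) - (r, z)) * e₁ r) ^ 2
              ≤ ∫⁻ z, duh ρ n p (r, z) ^ 2 *
                  (e₁ r ^ 2 * ENNReal.ofReal (1 / 2 * (√(t - r))⁻¹)) := by
                refine lintegral_mono fun z => ?_
                have : ∀ y, (duh ρ n p (r, z) * hk ((t, y) - (r, z)) * e₁ r) ^ 2 =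
                    (duh ρ n p (r, z) ^ 2 * e₁ r ^ 2) * hk (t - r, y - z) ^ 2 := fun y => by
                  rw [Prod.mk_sub_mk]; ring
                simp only [this]
                rw [lintegral_const_mul _ (by fun_prop), mul_assoc]
                gcongr
                exact lintegral_hk_sq_le (sub_pos.mpr hr.2) z
            _ = (∫⁻ z, duh ρ n p (r, z) ^ 2) *
                  (e₁ r ^ 2 * ENNReal.ofReal (1 / 2 * (√(t - r))⁻¹)) := by
                rw [lintegral_mul_const _ (by fun_prop)]
            _ ≤ ENNReal.ofReal (1 / 2 * (1 / 8) ^ n * (√(r - s))⁻¹ *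
                  exp (2 * (100 * a ^ 2) * (r - s) + 2 / a * ∫ x in s..r, g x)) *
                  (e₁ r ^ 2 * ENNReal.ofReal (1 / 2 * (√(t - r))⁻¹)) := by
                gcongr
                exact ih hr.1
            _ = _ := by
                rw [hsq₁, ← ENNReal.ofReal_mul (by positivity), ← ENNReal.ofReal_mul
                  (by positivity), ← ENNReal.ofReal_mul (by positivity)]
                congr 1
                have e1 : 2 * (100 * a ^ 2) * (t - s) + 2 / a * ∫ x in s..t, g x =
                    (2 * (100 * a ^ 2) * (r - s) + 2 / a * ∫ x in s..r, g x) + 2 / a * I r +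
                      2 * (100 * a ^ 2) * (t - r) := by
                  rw [← intervalIntegral.integral_add_adjacent_intervals (hii s r) (hii r t)]
                  ring
                have e2 : exp (2 * (100 * a ^ 2) * (t - r)) *
                    exp (-(2 * (100 * a ^ 2) * (t - r))) = 1 := by
                  rw [← Real.exp_add, add_neg_cancel, Real.exp_zero]
                rw [e1, Real.exp_add _ (2 * (100 * a ^ 2) * (t - r)), Real.exp_add _ (2 / a * I r)]
                linear_combination (-(1 / 4 * (1 / 8) ^ n * (√(r - s))⁻¹ * (√(t - r))⁻¹ *
                  exp (2 * (100 * a ^ 2) * (r - s) + 2 / a * ∫ x in s..r, g x) *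
                  exp (2 / a * I r))) * e2
      _ ≤ ENNReal.ofReal (1 / 4 * (1 / 8) ^ n *
            exp (2 * (100 * a ^ 2) * (t - s) + 2 / a * ∫ x in s..t, g x)) *
            ENNReal.ofReal (5 * (√(100 * a ^ 2))⁻¹ * (√(t - s))⁻¹) * ENNReal.ofReal (a / 2) := by
          rw [lintegral_const_mul' _ _ ENNReal.ofReal_ne_top]
          gcongr
          exact lintegral_beta_le (by positivity)
      _ = _ := by
          rw [← ENNReal.ofReal_mul (by positivity), ← ENNReal.ofReal_mul (by positivity)]
          congr 1
          have : √(100 * a ^ 2) = 10 * a := by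
            rw [show 100 * a ^ 2 = (10 * a) ^ 2 by ring, Real.sqrt_sq (by positivity)]
          rw [this]
          field_simp
          ring

/-- Summing the iterates: with `(∑ dₙ)² ≤ 2 ∑ 4ⁿ dₙ²`, the contraction factor `1/8` leaves a
geometric series of ratio `1/2`. -/
lemma lintegral_tsum_duh_sq_le {ρ : ℝ × ℝ → ℝ≥0∞} (hρ : Measurable ρ)
    (hfin : ∫⁻ w, ρ w ^ 2 ≠ ∞) {a : ℝ} (ha : 0 < a) (p : ℝ × ℝ) {t : ℝ} (ht : p.1 < t) :
    ∫⁻ y, (∑' n, duh ρ n p (t, y)) ^ 2 ≤ ENNReal.ofReal (2 * (√(t - p.1))⁻¹ *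
      exp (2 * (100 * a ^ 2) * (t - p.1) + 2 / a * (∫⁻ w, ρ w ^ 2).toReal)) := by
  set φ : ℝ → ℝ≥0∞ := fun r => ∫⁻ z, ρ (r, z) ^ 2 with hφ
  have hφm : Measurable φ :=
    Measurable.lintegral_prod_right' (f := fun x : ℝ × ℝ => ρ x ^ 2) (by fun_prop)
  have hφi : ∫⁻ r, φ r = ∫⁻ w, ρ w ^ 2 := by
    rw [Measure.volume_eq_prod, lintegral_prod _ (by fun_prop)]
  have hφfin : ∫⁻ r, φ r ≠ ∞ := hφi ▸ hfin
  set g : ℝ → ℝ := fun r => (φ r).toReal with hgdef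
  have hg : Integrable g := integrable_toReal_of_lintegral_ne_top hφm.aemeasurable hφfin
  have h0 : ∀ r, 0 ≤ g r := fun r => ENNReal.toReal_nonneg
  have hφg : ∀ᵐ r, ∫⁻ z, ρ (r, z) ^ 2 = ENNReal.ofReal (g r) := by
    filter_upwards [ae_lt_top hφm hφfin] with r hr
    exact (ENNReal.ofReal_toReal hr.ne).symm
  have hgle : ∫ x in p.1..t, g x ≤ (∫⁻ w, ρ w ^ 2).toReal := by
    rw [← hφi, intervalIntegral.integral_of_le ht.le,
      ← integral_toReal hφm.aemeasurable (ae_lt_top hφm hφfin)]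
    exact setIntegral_le_integral hg (Eventually.of_forall h0)
  have hdm : ∀ n, Measurable fun y => duh ρ n p (t, y) := fun n =>
    measurable_duh hρ n measurable_const (measurable_const.prodMk measurable_id)
  set X := (√(t - p.1))⁻¹ *
    exp (2 * (100 * a ^ 2) * (t - p.1) + 2 / a * (∫⁻ w, ρ w ^ 2).toReal) with hX
  calc _ ≤ ∫⁻ y, 2 * ∑' n, 4 ^ n * duh ρ n p (t, y) ^ 2 := lintegral_mono fun y => tsum_sq_le _
    _ = 2 * ∑' n, 4 ^ n * ∫⁻ y, duh ρ n p (t, y) ^ 2 := by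
        rw [lintegral_const_mul' _ _ (by norm_num), lintegral_tsum fun n => (((hdm n).pow_const 2).const_mul _).aemeasurable]
        congr 2
        ext n
        rw [lintegral_const_mul _ (by fun_prop)]
    _ ≤ 2 * ∑' n, (2⁻¹ : ℝ≥0∞) ^ n * ENNReal.ofReal (1 / 2 * X) := by
        refine mul_le_mul' le_rfl (ENNReal.tsum_le_tsum fun n => ?_)
        calc 4 ^ n * ∫⁻ y, duh ρ n p (t, y) ^ 2
            ≤ 4 ^ n * ENNReal.ofReal (1 / 2 * (1 / 8) ^ n * (√(t - p.1))⁻¹ *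
                exp (2 * (100 * a ^ 2) * (t - p.1) + 2 / a * ∫ x in p.1..t, g x)) := by
              gcongr
              exact lintegral_duh_sq_le hρ hg h0 hφg ha p n ht
          _ ≤ 4 ^ n * ENNReal.ofReal (1 / 2 * (1 / 8) ^ n * X) := by
              rw [hX, ← mul_assoc _ (√(t - p.1))⁻¹]
              gcongr
          _ = _ := by
              have e4 : (4 : ℝ≥0∞) ^ n = ENNReal.ofReal (4 ^ n) := by
                rw [ENNReal.ofReal_pow (by norm_num)]; norm_num
              have e2 : (2⁻¹ : ℝ≥0∞) ^ n = ENNReal.ofReal ((1 / 2) ^ n) := by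
                rw [ENNReal.ofReal_pow (by norm_num), one_div,
                  ENNReal.ofReal_inv_of_pos (by norm_num)]
                norm_num
              rw [e4, e2, ← ENNReal.ofReal_mul (by positivity), ← ENNReal.ofReal_mul
                (by positivity)]
              congr 1
              have : (4 : ℝ) ^ n * (1 / 8) ^ n = (1 / 2) ^ n := by
                rw [← mul_pow]; norm_num
              linear_combination (1 / 2 * X) * this
    _ = _ := by
        rw [ENNReal.tsum_mul_right, ENNReal.tsum_geometric, ENNReal.one_sub_inv_two, inv_inv,
          mul_assoc 2 (√(t - p.1))⁻¹, ← hX]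
        have : (2 : ℝ≥0∞) = ENNReal.ofReal 2 := by norm_num
        rw [this, ← ENNReal.ofReal_mul (by norm_num), ← ENNReal.ofReal_mul (by norm_num)]
        congr 1
        ring

/-- A measurable version of `|ρ|` on the strip, extended by zero. Only `ρ²` is assumed measurable, which
suffices because `|ρ| = √(ρ²)`. -/
lemma exists_measurable_majorant {ρ : ℝ → ℝ → ℝ} {s t : ℝ} (h : InL2 ρ s t) :
    ∃ ρ' : ℝ × ℝ → ℝ≥0∞, Measurable ρ' ∧
      (∀ᵐ r, r ∈ Ioo s t → ∀ᵐ z, ‖ρ r z‖ₑ ≤ ρ' (r, z)) ∧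
      ∫⁻ w, ρ' w ^ 2 = ENNReal.ofReal (l2sq ρ s t) := by
  set S : Set (ℝ × ℝ) := Icc s t ×ˢ univ with hS
  have hSm : MeasurableSet S := measurableSet_Icc.prod MeasurableSet.univ
  have hae : AEMeasurable (fun q : ℝ × ℝ => ‖ρ q.1 q.2‖ₑ) (volume.restrict S) := by
    have h1 : AEMeasurable (fun q : ℝ × ℝ => ENNReal.ofReal √((ρ q.1 q.2) ^ 2))
        (volume.restrict S) :=
      (Real.continuous_sqrt.measurable.comp_aemeasurable h.aemeasurable).ennreal_ofReal
    refine h1.congr (Eventually.of_forall fun q => ?_)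
    simp only
    rw [Real.sqrt_sq_eq_abs, Real.enorm_eq_ofReal_abs]
  obtain ⟨k, hk, hae_eq⟩ := hae
  refine ⟨S.indicator k, hk.indicator hSm, ?_, ?_⟩
  · have h1 := (ae_restrict_iff' hSm).mp hae_eq
    rw [Measure.volume_eq_prod] at h1
    filter_upwards [Measure.ae_ae_of_ae_prod h1] with r hr hrm
    filter_upwards [hr] with z hz
    have hmem : (r, z) ∈ S := ⟨Ioo_subset_Icc_self hrm, mem_univ _⟩
    rw [indicator_of_mem hmem]
    exact (hz hmem).le
  · have h1 : ∀ w, S.indicator k w ^ 2 = S.indicator (fun w => k w ^ 2) w := by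
      intro w
      by_cases hw : w ∈ S <;> simp [hw]
    simp only [h1]
    rw [lintegral_indicator hSm, l2sq, ofReal_integral_eq_lintegral_ofReal h
      (Eventually.of_forall fun q => sq_nonneg _)]
    refine lintegral_congr_ae ?_
    filter_upwards [hae_eq] with w hw
    rw [← hw, Real.enorm_eq_ofReal_abs, ← ENNReal.ofReal_pow (abs_nonneg _), sq_abs]

lemma eLpNorm_two_le_of_lintegral {f : ℝ → ℝ} {D : ℝ} {F : ℝ → ℝ≥0∞} (hf : ∀ y, ‖f y‖ₑ ≤ F y)
    (hF : ∫⁻ y, F y ^ 2 ≤ ENNReal.ofReal D ^ 2) : eLpNorm f 2 volume ≤ ENNReal.ofReal D := by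
  have h := eLpNorm_nnreal_pow_eq_lintegral (f := f) (μ := volume) (p := 2) (by norm_num)
  simp only [NNReal.coe_ofNat, ENNReal.rpow_ofNat, ENNReal.coe_ofNat] at h
  rw [← ENNReal.pow_le_pow_left_iff two_ne_zero, h]
  exact (lintegral_mono fun y => pow_le_pow_left₀ zero_le (hf y) 2).trans hF

/-- Point-to-`L²` and `L²`-to-point bounds on the kernel. -/
theorem kernel_point_to_L2_bounds :
    ∃ C : ℝ, 0 < C ∧ ∀ (s t a : ℝ) (ρ : ℝ → ℝ → ℝ),
      0 ≤ s → s < t → 0 < a → InL2 ρ s t →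
      (MeasureTheory.eLpNorm (fun y => kerP ρ s 0 t y) 2 MeasureTheory.volume ≤
        ENNReal.ofReal (C * (t - s) ^ (-(1 : ℝ) / 4) *
          Real.exp (a ^ 2 * C * (t - s) + a⁻¹ * l2sq ρ s t))) ∧
      (MeasureTheory.eLpNorm (fun x => kerP ρ s x t 0) 2 MeasureTheory.volume ≤
        ENNReal.ofReal (C * (t - s) ^ (-(1 : ℝ) / 4) *
          Real.exp (a ^ 2 * C * (t - s) + a⁻¹ * l2sq ρ s t))) := by
  refine ⟨100, by norm_num, fun s t a ρ _ hst ha hρ => ?_⟩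
  obtain ⟨ρ', hm, hle, hint⟩ := exists_measurable_majorant hρ
  have hτ : 0 < t - s := sub_pos.mpr hst
  have hl0 : 0 ≤ l2sq ρ s t := integral_nonneg fun q => sq_nonneg _
  have hker : ∀ x y, ‖kerP ρ s x t y‖ₑ ≤ ∑' n, duh ρ' n (s, x) (t, y) := fun x y =>
    enorm_tsum_le_tsum_enorm.trans
      (ENNReal.tsum_le_tsum fun n => enorm_kernelTerm_le hm hle x n hst le_rfl y)
  have hfinal : ENNReal.ofReal (2 * (√(t - s))⁻¹ *
      exp (2 * (100 * a ^ 2) * (t - s) + 2 / a * l2sq ρ s t)) ≤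
      ENNReal.ofReal (100 * (t - s) ^ (-(1 : ℝ) / 4) *
          Real.exp (a ^ 2 * 100 * (t - s) + a⁻¹ * l2sq ρ s t)) ^ 2 := by
    rw [← ENNReal.ofReal_pow (by positivity)]
    apply ENNReal.ofReal_le_ofReal
    have e1 : ((t - s) ^ (-(1 : ℝ) / 4)) ^ 2 = (√(t - s))⁻¹ := by
      rw [← Real.rpow_natCast, ← Real.rpow_mul hτ.le, Real.sqrt_eq_rpow, ← Real.rpow_neg hτ.le]
      norm_num
    rw [mul_pow, mul_pow, e1, ← Real.exp_nat_mul]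
    have e2 : ((2 : ℕ) : ℝ) * (a ^ 2 * 100 * (t - s) + a⁻¹ * l2sq ρ s t) =
        2 * (100 * a ^ 2) * (t - s) + 2 / a * l2sq ρ s t := by
      push_cast; field_simp
    rw [e2]
    gcongr
    norm_num
  have htoReal : (∫⁻ w, ρ' w ^ 2).toReal = l2sq ρ s t := by
    rw [hint, ENNReal.toReal_ofReal hl0]
  have hfin : ∫⁻ w, ρ' w ^ 2 ≠ ∞ := hint ▸ ENNReal.ofReal_ne_top
  constructor
  · refine eLpNorm_two_le_of_lintegral (hker 0) (le_trans ?_ hfinal)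
    rw [← htoReal]
    exact lintegral_tsum_duh_sq_le hm hfin ha (s, 0) hst
  · refine eLpNorm_two_le_of_lintegral (fun x => hker x 0) (le_trans ?_ hfinal)
    -- Space-time reversal turns the start point into the end point.
    have hrev : ∫⁻ w, ρ' (-w) ^ 2 = ∫⁻ w, ρ' w ^ 2 :=
      lintegral_neg_eq_self (fun w => ρ' w ^ 2)
    have key := lintegral_tsum_duh_sq_le (ρ := fun w => ρ' (-w)) (by fun_prop)
      (hrev ▸ hfin) ha (-t, 0) (t := -s) (by simpa using hst)
    rw [hrev, htoReal, show -s - (-t, (0 : ℝ)).1 = t - s by simp; ring] at key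
    refine le_trans (le_of_eq ?_) key
    rw [← lintegral_neg_eq_self]
    refine lintegral_congr fun x => ?_
    congr 2
    ext n
    rw [← duh_reflect hm]
    simp
end

section
/- Fix M ≥ 0. There exists a constant C(M) > 0 such that for all φ₁, φ₂ ∈ L²(ℝ) with 0 ≤ φ₁ ≤ M and 0 ≤ φ₂ ≤ M almost everywhere, one has |F(φ₁) − F(φ₂)| ≤ C(M) ‖φ₁ − φ₂‖_{L²(ℝ)}. -/
/-!
For an admissible `g`, write `G = ∫ g'²`. The fundamental theorem of calculus applied to `g²` gives
the one-dimensional Sobolev bound `g² ≤ 1 + G` pointwise, hence `∫ g⁴ ≤ 1 + G`, and by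
Cauchy–Schwarz replacing `φ₁` by `φ₂` changes the energy of `g` by at most
`√(1 + G) ‖φ₁ - φ₂‖`. It remains to see that only bounded `G` matter. A fixed Gaussian trial function
shows `F(φ₂) ≥ -K` with `K` independent of `φ₂`, whereas the energy of `g` is at most `M - G / 2`.
So if `G ≥ 2 (M + K)` the energy of `g` is already below `F(φ₂)`, and otherwise the previous estimate
applies with `G < 2 (M + K)`.
-/

open MeasureTheory Real Filter

/-- The ground-state energy functional
`F(φ) = sup { ∫ φ g² − ½ (g')² : ‖g‖_{L²} = 1, g, g' ∈ L² }`. -/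
noncomputable def Ffun (φ : ℝ → ℝ) : ℝ :=
  sSup { c : ℝ | ∃ g g' : ℝ → ℝ,
    (∀ x, HasDerivAt g (g' x) x) ∧
    MeasureTheory.Integrable (fun x => g x ^ 2) ∧
    MeasureTheory.Integrable (fun x => g' x ^ 2) ∧
    (∫ x : ℝ, g x ^ 2) = 1 ∧
    c = ∫ x : ℝ, (φ x * g x ^ 2 - (1 / 2) * g' x ^ 2) }

/-- `φ ∈ L²(ℝ)`. -/
def InL2R (φ : ℝ → ℝ) : Prop := MeasureTheory.Integrable (fun x => φ x ^ 2)

/-- `g` is a trial function for `Ffun` with derivative `g'`: both are square integrable and `g` is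
normalized in `L²`. -/
def Admissible (g g' : ℝ → ℝ) : Prop :=
  (∀ x, HasDerivAt g (g' x) x) ∧ Integrable (fun x => g x ^ 2) ∧
    Integrable (fun x => g' x ^ 2) ∧ (∫ x : ℝ, g x ^ 2) = 1

/-- The normalized Gaussian is a trial function. -/
lemma exists_admissible : ∃ g g' : ℝ → ℝ, Admissible g g' := by
  set I : ℝ := ∫ x : ℝ, rexp (-1 * x ^ 2) with hI
  have hIpos : 0 < I := by rw [hI, integral_gaussian]; positivity
  have e : ∀ x : ℝ, rexp (-x ^ 2 / 2) ^ 2 = rexp (-1 * x ^ 2) := by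
    intro x
    rw [← Real.exp_nat_mul]
    congr 1
    push_cast
    ring
  have hA : (√I)⁻¹ ^ 2 = I⁻¹ := by rw [inv_pow, Real.sq_sqrt hIpos.le]
  have h1 : (fun x : ℝ => ((√I)⁻¹ * rexp (-x ^ 2 / 2)) ^ 2)
      = fun x => I⁻¹ * rexp (-1 * x ^ 2) := by
    funext x; rw [mul_pow, e, hA]
  refine ⟨fun x => (√I)⁻¹ * rexp (-x ^ 2 / 2), fun x => (√I)⁻¹ * (rexp (-x ^ 2 / 2) * (-x)),
    fun x => ?_, ?_, ?_, ?_⟩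
  · refine (HasDerivAt.exp ?_).const_mul _
    have h := ((hasDerivAt_pow 2 x).fun_neg).div_const 2
    have hx : -((2 : ℕ) * x ^ (2 - 1)) / 2 = -x := by
      norm_num
      ring
    rwa [hx] at h
  · rw [h1]
    exact (integrable_exp_neg_mul_sq one_pos).const_mul _
  · have h2 : (fun x : ℝ => ((√I)⁻¹ * (rexp (-x ^ 2 / 2) * (-x))) ^ 2)
        = fun x => I⁻¹ * (x ^ (2 : ℝ) * rexp (-1 * x ^ 2)) := by
      funext x
      rw [mul_pow, mul_pow, e, hA, Real.rpow_two]
      ring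
    rw [h2]
    exact (integrable_rpow_mul_exp_neg_mul_sq one_pos (by norm_num)).const_mul _
  · rw [h1, integral_const_mul]
    exact inv_mul_cancel₀ hIpos.ne'

namespace Admissible

variable {g g' : ℝ → ℝ}

lemma continuous (h : Admissible g g') : Continuous g :=
  continuous_iff_continuousAt.2 fun x => (h.1 x).continuousAt

lemma measurable_deriv (h : Admissible g g') : Measurable g' := by
  have : g' = deriv g := funext fun x => (h.1 x).deriv.symm
  rw [this]
  exact _root_.measurable_deriv g

/-- The one-dimensional Sobolev bound: `g(x)² = ∫_{-∞}^x 2 g g' ≤ ∫ (g² + g'²)`. -/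
lemma sq_le (h : Admissible g g') (x : ℝ) : g x ^ 2 ≤ 1 + ∫ y, g' y ^ 2 := by
  have hd : ∀ y, HasDerivAt (fun y => g y ^ 2) (2 * g y * g' y) y := fun y => by
    simpa using (h.1 y).fun_pow 2
  have hs : Integrable (fun y => g y ^ 2 + g' y ^ 2) := h.2.1.add h.2.2.1
  have hi : Integrable (fun y => 2 * g y * g' y) := by
    refine hs.mono' ?_ (.of_forall fun y => ?_)
    · exact ((h.continuous.measurable.const_mul 2).mul h.measurable_deriv).aestronglyMeasurable
    · rw [Real.norm_eq_abs, abs_le]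
      constructor <;> nlinarith [sq_nonneg (g y + g' y), sq_nonneg (g y - g' y)]
  have h0 := tendsto_zero_of_hasDerivAt_of_integrableOn_Iic (a := x) (fun y _ => hd y)
    hi.integrableOn h.2.1.integrableOn
  have h1 : ∫ y in Set.Iic x, 2 * g y * g' y = g x ^ 2 - 0 :=
    integral_Iic_of_hasDerivAt_of_tendsto' (fun y _ => hd y) hi.integrableOn h0
  calc g x ^ 2 = ∫ y in Set.Iic x, 2 * g y * g' y := by rw [h1]; ring
    _ ≤ ∫ y in Set.Iic x, (g y ^ 2 + g' y ^ 2) :=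
        integral_mono hi.integrableOn hs.integrableOn fun y => by
          nlinarith [sq_nonneg (g y - g' y)]
    _ ≤ ∫ y, (g y ^ 2 + g' y ^ 2) :=
        setIntegral_le_integral hs (.of_forall fun y => by positivity)
    _ = 1 + ∫ y, g' y ^ 2 := by rw [integral_add h.2.1 h.2.2.1, h.2.2.2]

lemma sq_sq_le (h : Admissible g g') (x : ℝ) :
    (g x ^ 2) ^ 2 ≤ (1 + ∫ y, g' y ^ 2) * g x ^ 2 := by
  nlinarith [h.sq_le x, sq_nonneg (g x)]

lemma memLp_sq (h : Admissible g g') : MemLp (fun x => g x ^ 2) 2 := by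
  rw [memLp_two_iff_integrable_sq (by exact (h.continuous.pow 2).aestronglyMeasurable)]
  refine (h.2.1.const_mul (1 + ∫ y, g' y ^ 2)).mono'
    ((h.continuous.pow 2).pow 2).aestronglyMeasurable (.of_forall fun x => ?_)
  rw [Real.norm_of_nonneg (by positivity)]
  exact h.sq_sq_le x

lemma integral_pow_four_le (h : Admissible g g') :
    ∫ x, (g x ^ 2) ^ 2 ≤ 1 + ∫ y, g' y ^ 2 := by
  calc ∫ x, (g x ^ 2) ^ 2 ≤ ∫ x, (1 + ∫ y, g' y ^ 2) * g x ^ 2 :=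
        integral_mono h.memLp_sq.integrable_sq (h.2.1.const_mul _) h.sq_sq_le
    _ = 1 + ∫ y, g' y ^ 2 := by rw [integral_const_mul, h.2.2.2, mul_one]

end Admissible

/-- Cauchy–Schwarz for real-valued functions in `L²`. -/
lemma integral_mul_le_sqrt {u v : ℝ → ℝ} (hu : MemLp u 2) (hv : MemLp v 2) :
    ∫ x, u x * v x ≤ √(∫ x, u x ^ 2) * √(∫ x, v x ^ 2) := by
  have h := integral_mul_norm_le_Lp_mul_Lq (μ := volume) (f := u) (g := v)
    Real.HolderConjugate.two_two (by simpa using hu) (by simpa using hv)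
  simp only [Real.norm_eq_abs, Real.rpow_two, sq_abs, ← Real.sqrt_eq_rpow] at h
  refine le_trans (integral_mono (hu.integrable_mul hv) ?_ fun x => ?_) h
  · simpa [abs_mul] using (hu.integrable_mul hv).abs
  · simpa [abs_mul] using le_abs_self (u x * v x)

/-- A nonnegative function whose square is integrable is itself a.e. measurable, being the square
root of its square. -/
lemma InL2R.memLp {φ : ℝ → ℝ} (h : InL2R φ) (h0 : ∀ᵐ x, 0 ≤ φ x) : MemLp φ 2 := by
  have hm : AEStronglyMeasurable φ := by
    refine (h.1.aemeasurable.sqrt.congr ?_).aestronglyMeasurable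
    filter_upwards [h0] with x hx using Real.sqrt_sq hx
  exact (memLp_two_iff_integrable_sq hm).2 h

/-- The energy functional maximized in `Ffun`. -/
noncomputable def energy (φ g g' : ℝ → ℝ) : ℝ :=
  ∫ x : ℝ, (φ x * g x ^ 2 - (1 / 2) * g' x ^ 2)

section
variable {M : ℝ} {φ g g' : ℝ → ℝ}

lemma energy_eq (hφ : MemLp φ 2) (h : Admissible g g') :
    energy φ g g' = (∫ x, φ x * g x ^ 2) - (1 / 2) * ∫ x, g' x ^ 2 := by
  have hi : Integrable (fun x => φ x * g x ^ 2) := hφ.integrable_mul h.memLp_sq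
  rw [energy, integral_sub hi (h.2.2.1.const_mul _), integral_const_mul]

lemma energy_le (hφ : MemLp φ 2) (hb : ∀ᵐ x, 0 ≤ φ x ∧ φ x ≤ M) (h : Admissible g g') :
    energy φ g g' ≤ M - (1 / 2) * ∫ x, g' x ^ 2 := by
  rw [energy_eq hφ h]
  have : ∫ x, φ x * g x ^ 2 ≤ ∫ x, M * g x ^ 2 := by
    refine integral_mono_ae (hφ.integrable_mul h.memLp_sq) (h.2.1.const_mul _) ?_
    filter_upwards [hb] with x hx using mul_le_mul_of_nonneg_right hx.2 (sq_nonneg _)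
  rw [integral_const_mul, h.2.2.2] at this
  linarith

lemma le_energy (hφ : MemLp φ 2) (hb : ∀ᵐ x, 0 ≤ φ x ∧ φ x ≤ M) (h : Admissible g g') :
    -((1 / 2) * ∫ x, g' x ^ 2) ≤ energy φ g g' := by
  rw [energy_eq hφ h]
  have : 0 ≤ ∫ x, φ x * g x ^ 2 := by
    refine integral_nonneg_of_ae ?_
    filter_upwards [hb] with x hx using mul_nonneg hx.1 (sq_nonneg _)
  linarith

lemma energy_le_Ffun (hφ : MemLp φ 2) (hb : ∀ᵐ x, 0 ≤ φ x ∧ φ x ≤ M) (h : Admissible g g') :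
    energy φ g g' ≤ Ffun φ := by
  refine le_csSup ⟨M, ?_⟩ ⟨g, g', h.1, h.2.1, h.2.2.1, h.2.2.2, rfl⟩
  rintro c ⟨u, u', h1, h2, h3, h4, rfl⟩
  have h5 := energy_le hφ hb (g := u) (g' := u') ⟨h1, h2, h3, h4⟩
  have h6 : 0 ≤ ∫ x, u' x ^ 2 := integral_nonneg fun x => sq_nonneg _
  exact h5.trans (by linarith)

end

lemma Ffun_le_of_forall {φ : ℝ → ℝ} {B : ℝ}
    (hB : ∀ g g', Admissible g g' → energy φ g g' ≤ B) : Ffun φ ≤ B := by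
  obtain ⟨g, g', h⟩ := exists_admissible
  refine csSup_le ⟨_, g, g', h.1, h.2.1, h.2.2.1, h.2.2.2, rfl⟩ ?_
  rintro c ⟨u, u', h1, h2, h3, h4, rfl⟩
  exact hB u u' ⟨h1, h2, h3, h4⟩

lemma energy_le_energy_add {φ₁ φ₂ g g' : ℝ → ℝ} (h₁ : MemLp φ₁ 2) (h₂ : MemLp φ₂ 2)
    (h : Admissible g g') :
    energy φ₁ g g' ≤ energy φ₂ g g' +
      √(1 + ∫ x, g' x ^ 2) * √(∫ x, (φ₁ x - φ₂ x) ^ 2) := by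
  have hcs := integral_mul_le_sqrt (h₁.sub h₂) h.memLp_sq
  have hs := Real.sqrt_le_sqrt h.integral_pow_four_le
  have i₁ : Integrable (fun x => φ₁ x * g x ^ 2) := h₁.integrable_mul h.memLp_sq
  have i₂ : Integrable (fun x => φ₂ x * g x ^ 2) := h₂.integrable_mul h.memLp_sq
  simp only [Pi.sub_apply, sub_mul] at hcs
  rw [integral_sub i₁ i₂] at hcs
  have := mul_le_mul_of_nonneg_left hs (Real.sqrt_nonneg (∫ x, (φ₁ x - φ₂ x) ^ 2))
  rw [energy_eq h₁ h, energy_eq h₂ h]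
  linarith

/-- One side of the Lipschitz bound; the constant comes from the kinetic energy of an arbitrary
fixed trial function `g₀`. -/
lemma Ffun_le_add {M : ℝ} {φ₁ φ₂ g₀ g₀' : ℝ → ℝ} (h₁ : MemLp φ₁ 2) (h₂ : MemLp φ₂ 2)
    (b₁ : ∀ᵐ x, 0 ≤ φ₁ x ∧ φ₁ x ≤ M) (b₂ : ∀ᵐ x, 0 ≤ φ₂ x ∧ φ₂ x ≤ M)
    (h₀ : Admissible g₀ g₀') :
    Ffun φ₁ ≤ Ffun φ₂ +
      √(1 + 2 * M + ∫ x, g₀' x ^ 2) * √(∫ x, (φ₁ x - φ₂ x) ^ 2) := by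
  refine Ffun_le_of_forall fun g g' h => ?_
  have hlow := (le_energy h₂ b₂ h₀).trans (energy_le_Ffun h₂ b₂ h₀)
  rcases le_total (∫ x, g' x ^ 2) (2 * M + ∫ x, g₀' x ^ 2) with hG | hG
  · have hs : √(1 + ∫ x, g' x ^ 2) ≤ √(1 + 2 * M + ∫ x, g₀' x ^ 2) :=
      Real.sqrt_le_sqrt (by linarith)
    have := mul_le_mul_of_nonneg_right hs (Real.sqrt_nonneg (∫ x, (φ₁ x - φ₂ x) ^ 2))
    linarith [energy_le_energy_add h₁ h₂ h, energy_le_Ffun h₂ b₂ h]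
  -- A trial function with large kinetic energy has energy below that of `g₀`.
  · have : 0 ≤ √(1 + 2 * M + ∫ x, g₀' x ^ 2) * √(∫ x, (φ₁ x - φ₂ x) ^ 2) := by positivity
    linarith [energy_le h₁ b₁ h]

/-- Lipschitz continuity of `F` on `{φ : 0 ≤ φ ≤ M a.e.}`. -/
theorem F_lipschitz (M : ℝ) (hM : 0 ≤ M) :
    ∃ C : ℝ, 0 < C ∧ ∀ φ₁ φ₂ : ℝ → ℝ, InL2R φ₁ → InL2R φ₂ →
      (∀ᵐ x : ℝ ∂MeasureTheory.volume, 0 ≤ φ₁ x ∧ φ₁ x ≤ M) →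
      (∀ᵐ x : ℝ ∂MeasureTheory.volume, 0 ≤ φ₂ x ∧ φ₂ x ≤ M) →
      |Ffun φ₁ - Ffun φ₂| ≤ C * Real.sqrt (∫ x : ℝ, (φ₁ x - φ₂ x) ^ 2) := by
  obtain ⟨g₀, g₀', h₀⟩ := exists_admissible
  have hK : 0 ≤ ∫ x, g₀' x ^ 2 := integral_nonneg fun x => sq_nonneg _
  refine ⟨√(1 + 2 * M + ∫ x, g₀' x ^ 2), Real.sqrt_pos.2 (by linarith), ?_⟩
  intro φ₁ φ₂ l₁ l₂ b₁ b₂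
  have h₁ := l₁.memLp (b₁.mono fun _ hx => hx.1)
  have h₂ := l₂.memLp (b₂.mono fun _ hx => hx.1)
  have h12 := Ffun_le_add h₁ h₂ b₁ b₂ h₀
  have h21 := Ffun_le_add h₂ h₁ b₂ b₁ h₀
  simp only [sub_sq_comm (φ₂ _) (φ₁ _)] at h21
  rw [abs_le]
  constructor <;> linarith
end
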